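/- Fix a constant w > 0. Then, as q → ∞, |∑_{d₁,d₂ ≤ W} θ_{d₁} θ_{d₂} χ₀([d₁,d₂]) / [d₁,d₂]| ≤ (1 + O(L^{−1})) · q/(φ(q)·w·L), where [d₁,d₂] denotes the least common multiple of d₁ and d₂ and χ₀ is the principal Dirichlet character mod q. -/

import Mathlib

open scoped Classical

/-- The sieve weights `θ_d = μ(d)·log(W/d)/log W` for `1 ≤ d ≤ W = q^w`, and `0` otherwise. -/
noncomputable def thetaD (q : ℕ) (w : ℝ) (d : ℕ) : ℝ :=
  if 1 ≤ d ∧ (d : ℝ) ≤ (q : ℝ) ^ w then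
    (ArithmeticFunction.moebius d : ℝ) * Real.log ((q : ℝ) ^ w / d) /
      Real.log ((q : ℝ) ^ w)
  else 0



open ArithmeticFunction in
noncomputable def aux_gM (x : ℝ) : ℝ :=
  ∑ m ∈ Finset.Icc 1 ⌊x⌋₊, (moebius m : ℝ) / m * Real.log (x / m)

open ArithmeticFunction in
noncomputable def aux_gK (K : ℕ) (x : ℝ) : ℝ :=
  ∑ m ∈ Finset.Icc 1 ⌊x⌋₊, if Nat.Coprime m K then (moebius m : ℝ) / m * Real.log (x / m) else 0

lemma aux_hyperbola (f : ℕ → ℕ → ℝ) (x : ℝ) :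
    ∑ k ∈ Finset.Icc 1 ⌊x⌋₊, ∑ m ∈ Finset.Icc 1 ⌊x / k⌋₊, f k m =
      ∑ n ∈ Finset.Icc 1 ⌊x⌋₊, ∑ p ∈ n.divisorsAntidiagonal, f p.1 p.2 := by
  simp only [Nat.floor_div_natCast]
  set N := ⌊x⌋₊
  rw [Finset.sum_sigma', Finset.sum_sigma']
  refine Finset.sum_bij' (fun a _ => ⟨a.1 * a.2, (a.1, a.2)⟩) (fun b _ => ⟨b.2.1, b.2.2⟩) ?_ ?_ ?_ ?_ ?_
  · rintro ⟨a, b⟩ h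
    simp only [Finset.mem_sigma, Finset.mem_Icc, Nat.mem_divisorsAntidiagonal] at h ⊢
    obtain ⟨⟨h1, h2⟩, h3, h4⟩ := h
    have := (Nat.le_div_iff_mul_le h1).1 h4
    refine ⟨⟨by nlinarith, by linarith [mul_comm a b]⟩, trivial, by positivity⟩
  · rintro ⟨n, a, b⟩ h
    simp only [Finset.mem_sigma, Finset.mem_Icc, Nat.mem_divisorsAntidiagonal] at h ⊢
    obtain ⟨⟨h1, h2⟩, rfl, h4⟩ := h
    have ha : 0 < a := Nat.pos_of_ne_zero (by rintro rfl; simp at h4)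
    have hb : 0 < b := Nat.pos_of_ne_zero (by rintro rfl; simp at h4)
    refine ⟨⟨ha, by nlinarith⟩, hb, (Nat.le_div_iff_mul_le ha).2 (by linarith [mul_comm a b])⟩
  · rintro ⟨a, b⟩ h; rfl
  · rintro ⟨n, a, b⟩ h
    simp only [Finset.mem_sigma, Finset.mem_Icc, Nat.mem_divisorsAntidiagonal] at h
    obtain ⟨_, rfl, _⟩ := h
    rfl
  · rintro ⟨a, b⟩ h; rfl

open ArithmeticFunction in
lemma aux_conv (K n : ℕ) (hK : K ≠ 0) (hn : n ≠ 0) :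
    ∑ p ∈ n.divisorsAntidiagonal,
      (if p.1.primeFactors ⊆ K.primeFactors then (1 : ℝ) else 0) * (moebius p.2 : ℝ) =
    if Nat.Coprime n K then (moebius n : ℝ) else 0 := by
  let f : ArithmeticFunction ℤ :=
    ⟨fun n => if n ≠ 0 ∧ n.primeFactors ⊆ K.primeFactors then 1 else 0, by simp⟩
  let c : ArithmeticFunction ℤ := ⟨fun n => if Nat.Coprime n K then moebius n else 0, by simp⟩
  have hf : f.IsMultiplicative := by
    rw [IsMultiplicative.iff_ne_zero]
    refine ⟨by simp [f], ?_⟩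
    intro a b ha hb hab
    simp only [f, ArithmeticFunction.coe_mk, Nat.primeFactors_mul ha hb, Finset.union_subset_iff]
    by_cases h1 : a.primeFactors ⊆ K.primeFactors <;> by_cases h2 : b.primeFactors ⊆ K.primeFactors <;>
      simp [h1, h2, ha, hb]
  have hc : c.IsMultiplicative := by
    rw [IsMultiplicative.iff_ne_zero]
    refine ⟨by simp [c], ?_⟩
    intro a b ha hb hab
    simp only [c, ArithmeticFunction.coe_mk, Nat.coprime_mul_iff_left]
    rw [isMultiplicative_moebius.map_mul_of_coprime hab]
    split_ifs <;> first | tauto | simp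
  have key : f * moebius = c := by
    rw [IsMultiplicative.eq_iff_eq_on_prime_powers _ (hf.mul isMultiplicative_moebius) _ hc]
    intro p i hp
    rcases Nat.eq_zero_or_pos i with rfl | hi
    · rw [pow_zero, (hf.mul isMultiplicative_moebius).map_one, hc.map_one]
    by_cases hpK : p ∣ K
    · have h1 : ∀ d ∈ (p ^ i).divisorsAntidiagonal, f d.1 * moebius d.2 = (zeta : ArithmeticFunction ℤ) d.1 * moebius d.2 := by
        rintro ⟨a, b⟩ hd
        obtain ⟨hd, h0⟩ := Nat.mem_divisorsAntidiagonal.1 hd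
        have ha : a ≠ 0 := by rintro rfl; simp at hd; exact h0 hd.symm
        have : a.primeFactors ⊆ K.primeFactors := by
          intro r hr
          have hrp := Nat.prime_of_mem_primeFactors hr
          have : r ∣ p ^ i := (Nat.dvd_of_mem_primeFactors hr).trans ⟨b, hd.symm⟩
          have := (Nat.prime_dvd_prime_iff_eq hrp hp).1 (hrp.dvd_of_dvd_pow this)
          subst this
          simp [hrp, hpK, hK]
        simp [f, ha, this]
      rw [mul_apply, Finset.sum_congr rfl h1, ← mul_apply, coe_zeta_mul_moebius]
      have : ¬ Nat.Coprime (p^i) K := by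
        rw [Nat.coprime_pow_left_iff hi, hp.coprime_iff_not_dvd]; simpa using hpK
      have h2 : p ^ i ≠ 1 := by
        simp [hp.ne_one, hi.ne']
      simp [c, this, one_apply, h2, hp.ne_one, hi.ne']
    · have hcop : Nat.Coprime (p^i) K := (Nat.coprime_pow_left_iff hi _ _).2 ((hp.coprime_iff_not_dvd).2 hpK)
      rw [mul_apply, Finset.sum_eq_single (1, p^i)]
      · simp [f, c, hcop]
      · rintro ⟨a, b⟩ hd hne
        obtain ⟨hd, h0⟩ := Nat.mem_divisorsAntidiagonal.1 hd
        have : ¬ a.primeFactors ⊆ K.primeFactors := by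
          intro hsub
          have ha1 : a ≠ 1 := by
            rintro rfl; apply hne; simp at hd; simp [hd]
          obtain ⟨j, hj, rfl⟩ := (Nat.dvd_prime_pow hp).1 (⟨b, hd.symm⟩ : a ∣ p ^ i)
          have hj0 : j ≠ 0 := by rintro rfl; simp at ha1
          have : p ∈ K.primeFactors := hsub (by simp [Nat.primeFactors_prime_pow hj0 hp])
          exact hpK (Nat.dvd_of_mem_primeFactors this)
        simp [f, this]
      · intro h; exact absurd (by simp [hp.ne_zero]) h
  have := congrArg (fun h => ((h n : ℤ) : ℝ)) key
  simp only [mul_apply, c, ArithmeticFunction.coe_mk] at this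
  push_cast at this
  rw [← this]
  apply Finset.sum_congr rfl
  rintro ⟨a, b⟩ hd
  obtain ⟨hd, h0⟩ := Nat.mem_divisorsAntidiagonal.1 hd
  have ha : a ≠ 0 := by rintro rfl; simp at hd; exact h0 hd.symm
  simp [f, ha]

open ArithmeticFunction in
lemma aux_gK_eq (K : ℕ) (hK : K ≠ 0) (x : ℝ) :
    aux_gK K x = ∑ k ∈ Finset.Icc 1 ⌊x⌋₊,
      if k.primeFactors ⊆ K.primeFactors then (k : ℝ)⁻¹ * aux_gM (x / k) else 0 := by
  have h1 : ∀ k ∈ Finset.Icc 1 ⌊x⌋₊, (if k.primeFactors ⊆ K.primeFactors then (k : ℝ)⁻¹ * aux_gM (x / k) else 0)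
    = ∑ m ∈ Finset.Icc 1 ⌊x / k⌋₊, (if k.primeFactors ⊆ K.primeFactors then (1:ℝ) else 0) * (moebius m : ℝ) *
      (((k * m : ℕ) : ℝ)⁻¹ * Real.log (x / (k * m : ℕ))) := by
    intro k hk
    split_ifs with h
    · rw [aux_gM, Finset.mul_sum]
      apply Finset.sum_congr rfl
      intro m hm
      push_cast
      rw [div_div, mul_inv]; ring
    · simp
  rw [Finset.sum_congr rfl h1, aux_hyperbola (fun k m => (if k.primeFactors ⊆ K.primeFactors then (1:ℝ) else 0) * (moebius m : ℝ) *
      (((k * m : ℕ) : ℝ)⁻¹ * Real.log (x / (k * m : ℕ)))), aux_gK]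
  apply Finset.sum_congr rfl
  intro n hn
  have hn0 : n ≠ 0 := by have := (Finset.mem_Icc.1 hn).1; omega
  have : ∀ p ∈ n.divisorsAntidiagonal, (if p.1.primeFactors ⊆ K.primeFactors then (1:ℝ) else 0) * (moebius p.2 : ℝ) *
      (((p.1 * p.2 : ℕ) : ℝ)⁻¹ * Real.log (x / (p.1 * p.2 : ℕ))) = (if p.1.primeFactors ⊆ K.primeFactors then (1:ℝ) else 0) * (moebius p.2 : ℝ) *
      ((n : ℝ)⁻¹ * Real.log (x / n)) := by
    rintro ⟨a, b⟩ hd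
    obtain ⟨hd, h0⟩ := Nat.mem_divisorsAntidiagonal.1 hd
    simp only at hd ⊢
    rw [hd]
  rw [Finset.sum_congr rfl this, ← Finset.sum_mul, aux_conv K n hK hn0]
  split_ifs <;> ring

open ArithmeticFunction in
lemma aux_gM_sum (x : ℝ) (hx : 1 ≤ x) :
    ∑ k ∈ Finset.Icc 1 ⌊x⌋₊, (k : ℝ)⁻¹ * aux_gM (x / k) = Real.log x := by
  have h1 : ∀ k ∈ Finset.Icc 1 ⌊x⌋₊, (k : ℝ)⁻¹ * aux_gM (x / k)
    = ∑ m ∈ Finset.Icc 1 ⌊x / k⌋₊, (moebius m : ℝ) *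
      (((k * m : ℕ) : ℝ)⁻¹ * Real.log (x / (k * m : ℕ))) := by
    intro k hk
    rw [aux_gM, Finset.mul_sum]
    apply Finset.sum_congr rfl
    intro m hm
    push_cast
    rw [div_div, mul_inv]; ring
  rw [Finset.sum_congr rfl h1, aux_hyperbola (fun k m => (moebius m : ℝ) *
      (((k * m : ℕ) : ℝ)⁻¹ * Real.log (x / (k * m : ℕ))))]
  have h2 : ∀ n ∈ Finset.Icc 1 ⌊x⌋₊, (∑ p ∈ n.divisorsAntidiagonal, (moebius p.2 : ℝ) *
      (((p.1 * p.2 : ℕ) : ℝ)⁻¹ * Real.log (x / (p.1 * p.2 : ℕ)))) = if n = 1 then Real.log x else 0 := by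
    intro n hn
    have hn0 : n ≠ 0 := by have := (Finset.mem_Icc.1 hn).1; omega
    have : ∀ p ∈ n.divisorsAntidiagonal, (moebius p.2 : ℝ) *
      (((p.1 * p.2 : ℕ) : ℝ)⁻¹ * Real.log (x / (p.1 * p.2 : ℕ))) = (moebius p.2 : ℝ) *
      ((n : ℝ)⁻¹ * Real.log (x / n)) := by
      rintro ⟨a, b⟩ hd
      obtain ⟨hd, h0⟩ := Nat.mem_divisorsAntidiagonal.1 hd
      simp only at hd ⊢
      rw [hd]
    rw [Finset.sum_congr rfl this, ← Finset.sum_mul]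
    have h3 := congrArg (fun h => ((h n : ℤ) : ℝ)) coe_zeta_mul_moebius
    simp only [mul_apply] at h3
    push_cast at h3
    have h4 : ∑ p ∈ n.divisorsAntidiagonal, (moebius p.2 : ℝ) = if n = 1 then 1 else 0 := by
      rw [one_apply] at h3
      push_cast at h3
      rw [← h3]
      apply Finset.sum_congr rfl
      rintro ⟨a, b⟩ hd
      obtain ⟨hd, h0⟩ := Nat.mem_divisorsAntidiagonal.1 hd
      have ha : a ≠ 0 := by rintro rfl; simp at hd; exact h0 hd.symm
      simp [zeta_apply, ha]
    rw [h4]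
    split_ifs with h
    · subst h; simp
    · simp
  rw [Finset.sum_congr rfl h2, Finset.sum_ite_eq']
  have : 1 ≤ ⌊x⌋₊ := Nat.one_le_floor_iff x |>.2 hx
  simp [this]


lemma aux_fact_sum (K : ℕ) (hK : K ≠ 0) (N : ℕ) :
    ∑ k ∈ Finset.Icc 1 N, (if k.primeFactors ⊆ K.primeFactors then (k : ℝ)⁻¹ else 0) ≤
      (K : ℝ) / Nat.totient K := by
  let f : ℕ →* ℝ := ⟨⟨fun n => (n : ℝ)⁻¹, by simp⟩, by intro a b; simp [mul_comm]⟩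
  have hf : ∀ {p : ℕ}, p.Prime → ‖f p‖ < 1 := by
    intro p hp
    have : (1 : ℝ) < p := by exact_mod_cast hp.one_lt
    simp only [f, MonoidHom.coe_mk, OneHom.coe_mk, norm_inv, Real.norm_natCast]
    exact inv_lt_one_of_one_lt₀ this
  obtain ⟨hs, hsum⟩ := EulerProduct.summable_and_hasSum_factoredNumbers_prod_filter_prime_geometric
    hf K.primeFactors
  have hval : (∏ p ∈ K.primeFactors with p.Prime, (1 - f p)⁻¹) = (K : ℝ) / Nat.totient K := by
    have h1 : K.primeFactors.filter Nat.Prime = K.primeFactors :=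
      Finset.filter_true_of_mem (fun p hp => Nat.prime_of_mem_primeFactors hp)
    rw [h1, Finset.prod_inv_distrib]
    have h2 := Nat.totient_eq_mul_prod_factors K
    have h3 : (Nat.totient K : ℝ) = K * ∏ p ∈ K.primeFactors, (1 - (p : ℝ)⁻¹) := by
      have := congrArg (fun (x : ℚ) => (x : ℝ)) h2
      push_cast at this
      exact this
    have hK' : (K : ℝ) ≠ 0 := by exact_mod_cast hK
    rw [h3]
    simp only [f, MonoidHom.coe_mk, OneHom.coe_mk]
    rw [div_mul_eq_div_div, div_self hK', one_div]
  rw [← hval, ← Finset.sum_filter]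
  have h4 : ∀ k ∈ (Finset.Icc 1 N).filter (fun k => k.primeFactors ⊆ K.primeFactors),
      k ∈ Nat.factoredNumbers K.primeFactors := by
    intro k hk
    simp only [Finset.mem_filter, Finset.mem_Icc] at hk
    rw [Nat.mem_factoredNumbers_iff_primeFactors_subset]
    exact ⟨by omega, hk.2⟩
  rw [← Finset.sum_subtype_of_mem (fun k : ℕ => (k : ℝ)⁻¹) h4]
  exact sum_le_hasSum _ (fun i _ => by simp [f]) hsum

lemma aux_gK_sq (K : ℕ) (hK : K ≠ 0) (x : ℝ) :
    aux_gK K x ^ 2 ≤ (K : ℝ) / Nat.totient K * ∑ k ∈ Finset.Icc 1 ⌊x⌋₊,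
      if k.primeFactors ⊆ K.primeFactors then (k : ℝ)⁻¹ * aux_gM (x / k) ^ 2 else 0 := by
  rw [aux_gK_eq K hK]
  have h0 : ∀ k ∈ Finset.Icc 1 ⌊x⌋₊,
      0 ≤ (if k.primeFactors ⊆ K.primeFactors then (k : ℝ)⁻¹ * aux_gM (x / k) ^ 2 else 0) := by
    intro k _; split_ifs <;> positivity
  refine (Finset.sum_sq_le_sum_mul_sum_of_sq_le_mul (Finset.Icc 1 ⌊x⌋₊)
    (f := fun k => if k.primeFactors ⊆ K.primeFactors then (k : ℝ)⁻¹ else 0)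
    (g := fun k => if k.primeFactors ⊆ K.primeFactors then (k : ℝ)⁻¹ * aux_gM (x / k) ^ 2 else 0)
    ?_ h0 ?_).trans ?_
  · intro k _; split_ifs <;> positivity
  · intro k _
    split_ifs
    · apply le_of_eq; ring
    · simp
  · exact mul_le_mul_of_nonneg_right (aux_fact_sum K hK _) (Finset.sum_nonneg h0)

lemma aux_sum_dvd (F : ℕ → ℝ) (N r : ℕ) (hr : 0 < r) :
    ∑ d ∈ Finset.Icc 1 N, (if r ∣ d then F d else 0) = ∑ m ∈ Finset.Icc 1 (N / r), F (r * m) := by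
  rw [← Finset.sum_filter]
  symm
  refine Finset.sum_bij (fun m _ => r * m) ?_ ?_ ?_ ?_
  · intro m hm
    simp only [Finset.mem_filter, Finset.mem_Icc] at hm ⊢
    have := (Nat.le_div_iff_mul_le hr).1 hm.2
    exact ⟨⟨by nlinarith, by linarith [mul_comm m r]⟩, dvd_mul_right _ _⟩
  · intro a _ b _ h
    exact Nat.eq_of_mul_eq_mul_left hr h
  · intro d hd
    simp only [Finset.mem_filter, Finset.mem_Icc] at hd
    obtain ⟨⟨h1, h2⟩, m, rfl⟩ := hd
    refine ⟨m, ?_, rfl⟩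
    simp only [Finset.mem_Icc]
    refine ⟨Nat.pos_of_ne_zero (by rintro rfl; simp at h1), (Nat.le_div_iff_mul_le hr).2 (by linarith [mul_comm m r])⟩
  · intro m hm; rfl

open ArithmeticFunction in
noncomputable def aux_b (q : ℕ) (W : ℝ) (d : ℕ) : ℝ :=
  if Nat.Coprime d q then (moebius d : ℝ) * Real.log (W / d) else 0

open ArithmeticFunction in
lemma aux_y (q : ℕ) (W : ℝ) (r : ℕ) (hr : 0 < r) :
    ∑ d ∈ Finset.Icc 1 ⌊W⌋₊, (if r ∣ d then aux_b q W d / d else 0) =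
      if Nat.Coprime r q then (moebius r : ℝ) / r * aux_gK (r * q) (W / r) else 0 := by
  rw [aux_sum_dvd (fun d => aux_b q W d / d) _ r hr, aux_gK, Nat.floor_div_natCast]
  split_ifs with h
  · rw [Finset.mul_sum]
    apply Finset.sum_congr rfl
    intro m hm
    simp only [aux_b, Nat.coprime_mul_iff_left, Nat.coprime_mul_iff_right]
    by_cases h1 : m.Coprime q
    · by_cases h2 : m.Coprime r
      · rw [if_pos ⟨h, h1⟩, if_pos ⟨h2, h1⟩, isMultiplicative_moebius.map_mul_of_coprime h2.symm]
        push_cast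
        rw [div_div]
        ring
      · rw [if_pos ⟨h, h1⟩, if_neg (by tauto), moebius_eq_zero_of_not_squarefree]
        · simp
        · rw [Nat.squarefree_mul_iff]; intro h3; exact h2 h3.1.symm
    · rw [if_neg (by tauto), if_neg (by tauto)]; simp
  · apply Finset.sum_eq_zero
    intro m _
    simp [aux_b, Nat.coprime_mul_iff_left, h]

lemma aux_diag (N : ℕ) (b : ℕ → ℝ) :
    ∑ d₁ ∈ Finset.Icc 1 N, ∑ d₂ ∈ Finset.Icc 1 N, b d₁ * b d₂ * ((Nat.lcm d₁ d₂ : ℝ))⁻¹ =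
      ∑ r ∈ Finset.Icc 1 N, (Nat.totient r : ℝ) *
        (∑ d ∈ Finset.Icc 1 N, (if r ∣ d then b d / d else 0)) ^ 2 := by
  have h1 : ∀ d₁ ∈ Finset.Icc 1 N, ∀ d₂ ∈ Finset.Icc 1 N, b d₁ * b d₂ * ((Nat.lcm d₁ d₂ : ℝ))⁻¹ =
      ∑ r ∈ Finset.Icc 1 N, (Nat.totient r : ℝ) * ((if r ∣ d₁ then b d₁ / d₁ else 0) *
        (if r ∣ d₂ then b d₂ / d₂ else 0)) := by
    intro d₁ h1 d₂ h2
    rw [Finset.mem_Icc] at h1 h2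
    have hg : ((Nat.gcd d₁ d₂ : ℕ) : ℝ) = ∑ r ∈ Finset.Icc 1 N, if r ∣ d₁ ∧ r ∣ d₂ then (Nat.totient r : ℝ) else 0 := by
      rw [← Finset.sum_filter]
      conv_lhs => rw [← Nat.sum_totient (Nat.gcd d₁ d₂)]
      push_cast
      apply Finset.sum_congr _ (fun _ _ => rfl)
      ext r
      simp only [Nat.mem_divisors, Finset.mem_filter, Finset.mem_Icc, Nat.dvd_gcd_iff]
      constructor
      · rintro ⟨⟨ha, hb⟩, hc⟩
        exact ⟨⟨Nat.pos_of_dvd_of_pos ha (by omega), (Nat.le_of_dvd (by omega) ha).trans h1.2⟩, ha, hb⟩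
      · rintro ⟨_, ha, hb⟩
        exact ⟨⟨ha, hb⟩, (Nat.gcd_pos_of_pos_left _ (by omega)).ne'⟩
    have hl : ((Nat.gcd d₁ d₂ : ℕ) : ℝ) * (Nat.lcm d₁ d₂ : ℕ) = d₁ * d₂ := by
      exact_mod_cast Nat.gcd_mul_lcm d₁ d₂
    have hp1 : (d₁ : ℝ) ≠ 0 := by have := h1.1; positivity
    have hp2 : (d₂ : ℝ) ≠ 0 := by have := h2.1; positivity
    have hlc : ((Nat.lcm d₁ d₂ : ℕ) : ℝ) ≠ 0 := by
      intro h; rw [h, mul_zero] at hl; exact mul_ne_zero hp1 hp2 hl.symm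
    have : b d₁ * b d₂ * ((Nat.lcm d₁ d₂ : ℝ))⁻¹ = (b d₁ / d₁ * (b d₂ / d₂)) * ((Nat.gcd d₁ d₂ : ℕ) : ℝ) := by
      field_simp
      linear_combination (-(b d₁ * b d₂)) * hl
    rw [this, hg, Finset.mul_sum]
    apply Finset.sum_congr rfl
    intro r _
    by_cases ha : r ∣ d₁ <;> by_cases hb : r ∣ d₂ <;> simp [ha, hb] <;> ring
  rw [Finset.sum_congr rfl (fun d₁ hd₁ => Finset.sum_congr rfl (fun d₂ hd₂ => h1 d₁ hd₁ d₂ hd₂))]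
  have h2 : ∀ d₁ ∈ Finset.Icc 1 N, (∑ d₂ ∈ Finset.Icc 1 N, ∑ r ∈ Finset.Icc 1 N, (Nat.totient r : ℝ) * ((if r ∣ d₁ then b d₁ / d₁ else 0) *
        (if r ∣ d₂ then b d₂ / d₂ else 0))) = ∑ r ∈ Finset.Icc 1 N, ∑ d₂ ∈ Finset.Icc 1 N, (Nat.totient r : ℝ) * ((if r ∣ d₁ then b d₁ / d₁ else 0) *
        (if r ∣ d₂ then b d₂ / d₂ else 0)) := fun d₁ _ => Finset.sum_comm
  rw [Finset.sum_congr rfl h2, Finset.sum_comm]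
  apply Finset.sum_congr rfl
  intro r _
  rw [sq, Finset.sum_mul_sum, Finset.mul_sum]
  simp_rw [Finset.mul_sum]

open ArithmeticFunction in
lemma aux_T_bound (q : ℕ) (hq : q ≠ 0) (W : ℝ) :
    ∑ r ∈ Finset.Icc 1 ⌊W⌋₊, (Nat.totient r : ℝ) *
        (∑ d ∈ Finset.Icc 1 ⌊W⌋₊, (if r ∣ d then aux_b q W d / d else 0)) ^ 2 ≤
      (q : ℝ) / Nat.totient q * ∑ n ∈ Finset.Icc 1 ⌊W⌋₊, (n : ℝ)⁻¹ * aux_gM (W / n) ^ 2 := by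
  set N := ⌊W⌋₊ with hN
  set Q : ℝ := (q : ℝ) / Nat.totient q with hQ
  have hQ0 : 0 ≤ Q := by positivity
  have h1 : ∀ r ∈ Finset.Icc 1 N, (Nat.totient r : ℝ) *
        (∑ d ∈ Finset.Icc 1 N, (if r ∣ d then aux_b q W d / d else 0)) ^ 2 ≤
      if Squarefree r ∧ Nat.Coprime r q then Q * ∑ k ∈ Finset.Icc 1 (N / r),
        (if k.primeFactors ⊆ (r * q).primeFactors then ((r * k : ℕ) : ℝ)⁻¹ * aux_gM (W / (r * k : ℕ)) ^ 2 else 0)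
      else 0 := by
    intro r hr
    have hr0 : 0 < r := (Finset.mem_Icc.1 hr).1
    have hr0' : (0 : ℝ) < r := by exact_mod_cast hr0
    rw [aux_y q W r hr0]
    by_cases hc : Nat.Coprime r q
    · by_cases hs : Squarefree r
      · rw [if_pos hc, if_pos ⟨hs, hc⟩]
        have hmu : ((moebius r : ℝ)) ^ 2 = 1 := by
          have := moebius_sq_eq_one_of_squarefree hs
          exact_mod_cast this
        have hb := aux_gK_sq (r * q) (by positivity) (W / r)
        rw [Nat.floor_div_natCast] at hb
        have hφ : (0 : ℝ) < Nat.totient r := by exact_mod_cast Nat.totient_pos.2 hr0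
        have hφq : (0 : ℝ) < Nat.totient q := by exact_mod_cast Nat.totient_pos.2 (Nat.pos_of_ne_zero hq)
        rw [mul_pow, div_pow, hmu]
        calc (Nat.totient r : ℝ) * (1 / (r : ℝ) ^ 2 * aux_gK (r * q) (W / r) ^ 2) 
            ≤ (Nat.totient r : ℝ) * (1 / (r : ℝ) ^ 2 * (((r * q : ℕ) : ℝ) / Nat.totient (r * q) * ∑ k ∈ Finset.Icc 1 (N / r),
      if k.primeFactors ⊆ (r * q).primeFactors then (k : ℝ)⁻¹ * aux_gM (W / r / k) ^ 2 else 0)) := by gcongr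
          _ = _ := by
            rw [Nat.totient_mul hc, Finset.mul_sum, Finset.mul_sum, Finset.mul_sum, Finset.mul_sum]
            apply Finset.sum_congr rfl
            intro k hk
            have hk0 : (0 : ℝ) < k := by exact_mod_cast (Finset.mem_Icc.1 hk).1
            split_ifs
            · rw [hQ]
              push_cast
              rw [div_div]
              field_simp
            · simp
      · rw [if_pos hc, if_neg (by tauto), moebius_eq_zero_of_not_squarefree hs]
        simp
    · rw [if_neg hc, if_neg (by tauto)]; simp
  refine (Finset.sum_le_sum h1).trans ?_
  rw [← Finset.sum_filter, ← Finset.mul_sum]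
  refine mul_le_mul_of_nonneg_left ?_ hQ0
  simp_rw [← Finset.sum_filter]
  rw [Finset.sum_sigma']
  have hinj : Set.InjOn (fun a : (_ : ℕ) × ℕ => a.1 * a.2)
      (((Finset.Icc 1 N).filter (fun r => Squarefree r ∧ Nat.Coprime r q)).sigma
        (fun r => (Finset.Icc 1 (N / r)).filter (fun k => k.primeFactors ⊆ (r * q).primeFactors))) := by
    have key : ∀ r k : ℕ, 0 < r → 0 < k → Squarefree r → Nat.Coprime r q → k.primeFactors ⊆ (r * q).primeFactors →
        r = ∏ p ∈ (r * k).primeFactors.filter (fun p => ¬ p ∣ q), p := by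
      intro r k hr hk hs hc hsub
      conv_lhs => rw [← Nat.prod_primeFactors_of_squarefree hs]
      apply Finset.prod_congr _ (fun _ _ => rfl)
      ext p
      rw [Finset.mem_filter, Nat.primeFactors_mul hr.ne' hk.ne', Finset.mem_union]
      constructor
      · intro hp
        refine ⟨Or.inl hp, fun hpq => ?_⟩
        have hpp := Nat.prime_of_mem_primeFactors hp
        have := Nat.dvd_gcd (Nat.dvd_of_mem_primeFactors hp) hpq
        rw [hc] at this
        exact hpp.one_lt.ne' (Nat.dvd_one.1 this)
      · rintro ⟨h | h, hpq⟩
        · exact h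
        · have := hsub h
          rw [Nat.primeFactors_mul hr.ne' hq, Finset.mem_union] at this
          rcases this with h | h
          · exact h
          · exact absurd (Nat.dvd_of_mem_primeFactors h) hpq
    rintro ⟨r, k⟩ h ⟨r', k'⟩ h' heq
    simp only [Finset.coe_sigma, Set.mem_sigma_iff, Finset.mem_coe, Finset.mem_filter, Finset.mem_Icc] at h h' heq
    have e1 := key r k h.1.1.1 h.2.1.1 h.1.2.1 h.1.2.2 h.2.2
    have e2 := key r' k' h'.1.1.1 h'.2.1.1 h'.1.2.1 h'.1.2.2 h'.2.2
    rw [heq, ← e2] at e1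
    subst e1
    have := Nat.eq_of_mul_eq_mul_left h.1.1.1 heq
    subst this
    rfl
  rw [← Finset.sum_image (f := fun n : ℕ => (n : ℝ)⁻¹ * aux_gM (W / n) ^ 2) hinj]
  apply Finset.sum_le_sum_of_subset_of_nonneg
  · intro n hn
    simp only [Finset.mem_image, Finset.mem_sigma, Finset.mem_filter, Finset.mem_Icc] at hn
    obtain ⟨⟨r, k⟩, ⟨⟨⟨h1, h2⟩, h3⟩, ⟨⟨h4, h5⟩, h6⟩⟩, rfl⟩ := hn
    simp only at *
    rw [Finset.mem_Icc]
    have := (Nat.le_div_iff_mul_le h1).1 h5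
    exact ⟨by nlinarith, by linarith [mul_comm k r]⟩
  · intro n _ _; positivity


noncomputable def aux_T (n : ℕ) (s : ℂ) : ℂ :=
  ((((n + 2 : ℝ) : ℂ)) ^ (1 - s) - (((n + 1 : ℝ) : ℂ)) ^ (1 - s)) / (1 - s) - (((n + 2 : ℝ) : ℂ)) ^ (-s)

lemma aux_T_le (n : ℕ) (s : ℂ) (hs1 : s ≠ 1) (B : ℝ)
    (hB : ∀ x ∈ Set.Icc (n + 1 : ℝ) (n + 2), ‖((x : ℂ)) ^ (-s) - (((n + 2 : ℝ) : ℂ)) ^ (-s)‖ ≤ B) :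
    ‖aux_T n s‖ ≤ B := by
  have hn : (0 : ℝ) ≤ n := Nat.cast_nonneg n
  have h1s : 1 - s ≠ 0 := sub_ne_zero.2 hs1.symm
  have key := (convex_Icc (n + 1 : ℝ) (n + 2)).norm_image_sub_le_of_norm_hasDerivWithin_le
    (f := fun x : ℝ => ((x : ℂ)) ^ (1 - s) / (1 - s) - x * (((n + 2 : ℝ) : ℂ)) ^ (-s))
    (f' := fun x : ℝ => ((x : ℂ)) ^ (-s) - (((n + 2 : ℝ) : ℂ)) ^ (-s)) (C := B)
    (x := (n + 1 : ℝ)) (y := (n + 2 : ℝ)) ?_ hB ?_ ?_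
  · have h2 : ‖((n + 2 : ℝ) - (n + 1 : ℝ))‖ = 1 := by
      rw [show ((n + 2 : ℝ) - (n + 1 : ℝ)) = 1 by ring]; simp
    rw [h2, mul_one] at key
    refine le_trans (le_of_eq ?_) key
    congr 1
    simp only [aux_T]
    field_simp
    push_cast
    ring
  · intro x hx
    have hx0 : x ≠ 0 := by have := hx.1; intro h; subst h; linarith
    have h := (hasDerivAt_ofReal_cpow_const (x := x) hx0 (r := 1 - s) h1s).div_const (1 - s)
    rw [mul_div_cancel_left₀ _ h1s, show (1 - s - 1) = -s by ring] at h
    have h3 : HasDerivAt (fun x : ℝ => (x : ℂ) * (((n + 2 : ℝ) : ℂ)) ^ (-s)) (1 * (((n + 2 : ℝ) : ℂ)) ^ (-s)) x :=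
      (Complex.ofRealCLM.hasDerivAt (x := x)).mul_const _
    rw [one_mul] at h3
    exact (h.sub h3).hasDerivWithinAt
  · constructor <;> linarith
  · constructor <;> linarith

lemma aux_T_bound1 (n : ℕ) (s : ℂ) (hs1 : s ≠ 1) (hs : 0 < s.re) :
    ‖aux_T n s‖ ≤ 2 * (n + 1 : ℝ) ^ (-s.re) := by
  have hn : (0 : ℝ) ≤ n := Nat.cast_nonneg n
  apply aux_T_le n s hs1
  intro x hx
  have hx0 : 0 < x := by linarith [hx.1]
  refine (norm_sub_le _ _).trans ?_
  rw [Complex.norm_cpow_eq_rpow_re_of_pos hx0, Complex.norm_cpow_eq_rpow_re_of_pos (by linarith)]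
  have h1 : x ^ (-s).re ≤ (n + 1 : ℝ) ^ (-s.re) :=
    Real.rpow_le_rpow_of_nonpos (by linarith) hx.1 (by simp; linarith)
  have h2 : (n + 2 : ℝ) ^ (-s).re ≤ (n + 1 : ℝ) ^ (-s.re) :=
    Real.rpow_le_rpow_of_nonpos (by linarith) (by linarith) (by simp; linarith)
  linarith

lemma aux_T_bound2 (n : ℕ) (s : ℂ) (hs1 : s ≠ 1) (hs : 0 < s.re) :
    ‖aux_T n s‖ ≤ ‖s‖ * (n + 1 : ℝ) ^ (-s.re - 1) := by
  have hn : (0 : ℝ) ≤ n := Nat.cast_nonneg n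
  have hs0 : s ≠ 0 := by rintro rfl; simp at hs
  apply aux_T_le n s hs1
  intro x hx
  have hx0 : 0 < x := by linarith [hx.1]
  have key := (convex_Icc (n + 1 : ℝ) (n + 2)).norm_image_sub_le_of_norm_hasDerivWithin_le
    (f := fun x : ℝ => ((x : ℂ)) ^ (-s))
    (f' := fun x : ℝ => -s * ((x : ℂ)) ^ (-s - 1)) (C := ‖s‖ * (n + 1 : ℝ) ^ (-s.re - 1))
    (x := (n + 2 : ℝ)) (y := x) ?_ ?_ ?_ hx
  · refine key.trans ?_
    have : ‖x - (n + 2 : ℝ)‖ ≤ 1 := by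
      rw [Real.norm_eq_abs, abs_le]; constructor <;> linarith [hx.1, hx.2]
    exact mul_le_of_le_one_right (by positivity) this
  · intro y hy
    have hy0 : y ≠ 0 := by have := hy.1; intro h; subst h; linarith
    exact (hasDerivAt_ofReal_cpow_const (x := y) hy0 (r := -s) (neg_ne_zero.2 hs0)).hasDerivWithinAt
  · intro y hy
    have hy0 : 0 < y := by linarith [hy.1]
    rw [norm_mul, norm_neg, Complex.norm_cpow_eq_rpow_re_of_pos hy0]
    gcongr
    simp only [Complex.sub_re, Complex.neg_re, Complex.one_re]
    exact Real.rpow_le_rpow_of_nonpos (by linarith) hy.1 (by linarith)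
  · constructor <;> linarith

lemma aux_T_bound3 (n : ℕ) (s : ℂ) (hs1 : s ≠ 1) (hs : 31 / 32 ≤ s.re) :
    ‖aux_T n s‖ ≤ 2 * ‖s‖ ^ (1 / 16 : ℝ) * (n + 1 : ℝ) ^ (-(33 / 32) : ℝ) := by
  have hn : (0 : ℝ) ≤ n := Nat.cast_nonneg n
  have b1 := aux_T_bound1 n s hs1 (by linarith)
  have b2 := aux_T_bound2 n s hs1 (by linarith)
  have h0 := norm_nonneg (aux_T n s)
  calc ‖aux_T n s‖ = ‖aux_T n s‖ ^ (15 / 16 : ℝ) * ‖aux_T n s‖ ^ (1 / 16 : ℝ) := by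
        rw [← Real.rpow_add_of_nonneg h0 (by norm_num) (by norm_num)]; norm_num
    _ ≤ (2 * (n + 1 : ℝ) ^ (-s.re)) ^ (15 / 16 : ℝ) * (‖s‖ * (n + 1 : ℝ) ^ (-s.re - 1)) ^ (1 / 16 : ℝ) := by
        gcongr
    _ = 2 ^ (15 / 16 : ℝ) * ‖s‖ ^ (1 / 16 : ℝ) * (n + 1 : ℝ) ^ (-s.re - 1 / 16) := by
        rw [Real.mul_rpow (by norm_num) (by positivity), Real.mul_rpow (by positivity) (by positivity),
          ← Real.rpow_mul (by positivity), ← Real.rpow_mul (by positivity)]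
        rw [show (-s.re - 1 / 16 : ℝ) = -s.re * (15 / 16) + (-s.re - 1) * (1 / 16) by ring,
          Real.rpow_add (by positivity)]
        ring
    _ ≤ _ := by
        have h2 : (2 : ℝ) ^ (15 / 16 : ℝ) ≤ 2 := by
          calc (2 : ℝ) ^ (15 / 16 : ℝ) ≤ 2 ^ (1 : ℝ) :=
                Real.rpow_le_rpow_of_exponent_le (by norm_num) (by norm_num)
            _ = 2 := by simp
        have h3 : (n + 1 : ℝ) ^ (-s.re - 1 / 16) ≤ (n + 1 : ℝ) ^ (-(33 / 32) : ℝ) :=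
          Real.rpow_le_rpow_of_exponent_le (by linarith) (by linarith)
        gcongr

lemma aux_zeta_sum (s : ℂ) (hs : 1 < s.re) :
    riemannZeta s = 1 + 1 / (s - 1) - ∑' n : ℕ, aux_T n s := by
  have hs1 : s ≠ 1 := by rintro rfl; simp at hs
  have h1s : 1 - s ≠ 0 := sub_ne_zero.2 hs1.symm
  have h1s' : s - 1 ≠ 0 := sub_ne_zero.2 hs1
  have hz : Summable (fun n : ℕ => 1 / ((n : ℂ) + 1) ^ s) := by
    have := (Complex.summable_one_div_nat_cpow (p := s)).2 hs
    have := (summable_nat_add_iff 1).2 this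
    simpa using this
  have hz1 := zeta_eq_tsum_one_div_nat_add_one_cpow hs
  rw [hz.tsum_eq_zero_add] at hz1
  simp only [Nat.cast_zero, zero_add, Complex.one_cpow, div_one] at hz1
  have hz2 := (summable_nat_add_iff 1).2 hz
  have hsum : Summable (fun n : ℕ => ((((n + 2 : ℝ) : ℂ)) ^ (1 - s) - (((n + 1 : ℝ) : ℂ)) ^ (1 - s)) / (1 - s))
      ∧ ∑' n : ℕ, ((((n + 2 : ℝ) : ℂ)) ^ (1 - s) - (((n + 1 : ℝ) : ℂ)) ^ (1 - s)) / (1 - s) = 1 / (s - 1) := by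
    have hT : Summable (fun n : ℕ => aux_T n s) := by
      refine Summable.of_norm_bounded (g := fun n : ℕ => ‖s‖ * ((n + 1 : ℕ) : ℝ) ^ (-s.re - 1)) ?_ ?_
      · apply Summable.mul_left
        exact (summable_nat_add_iff 1).2 (Real.summable_nat_rpow.2 (by linarith))
      · intro n; push_cast; exact aux_T_bound2 n s hs1 (by linarith)
    have hS : Summable (fun n : ℕ => ((((n + 2 : ℝ) : ℂ)) ^ (1 - s) - (((n + 1 : ℝ) : ℂ)) ^ (1 - s)) / (1 - s)) := by
      have := hT.add hz2
      refine this.congr fun n => ?_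
      simp only [aux_T, Complex.cpow_neg]
      push_cast
      rw [show (n : ℂ) + 1 + 1 = n + 2 by ring]
      ring
    refine ⟨hS, ?_⟩
    refine tendsto_nhds_unique hS.hasSum.tendsto_sum_nat ?_
    have : ∀ N : ℕ, ∑ n ∈ Finset.range N, ((((n + 2 : ℝ) : ℂ)) ^ (1 - s) - (((n + 1 : ℝ) : ℂ)) ^ (1 - s)) / (1 - s)
        = ((((N : ℝ) + 1 : ℝ) : ℂ) ^ (1 - s) - 1) / (1 - s) := by
      intro N
      rw [← Finset.sum_div]
      congr 1
      have := Finset.sum_range_sub (fun n : ℕ => (((n : ℝ) + 1 : ℝ) : ℂ) ^ (1 - s)) N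
      simp only [Nat.cast_zero, zero_add, Complex.ofReal_one, Complex.one_cpow] at this
      rw [← this]
      refine Finset.sum_congr rfl fun n _ => ?_
      push_cast
      rw [show (n : ℂ) + 1 + 1 = n + 2 by ring]
    simp only [this]
    have hlim : Filter.Tendsto (fun N : ℕ => (((N : ℝ) + 1 : ℝ) : ℂ) ^ (1 - s)) Filter.atTop (nhds 0) := by
      rw [tendsto_zero_iff_norm_tendsto_zero]
      have : ∀ N : ℕ, ‖(((N : ℝ) + 1 : ℝ) : ℂ) ^ (1 - s)‖ = ((N : ℝ) + 1) ^ (-(s.re - 1)) := by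
        intro N
        rw [Complex.norm_cpow_eq_rpow_re_of_pos (by positivity)]
        simp
      simp only [this]
      exact (tendsto_rpow_neg_atTop (by linarith)).comp
        (Filter.tendsto_atTop_add_const_right _ _ tendsto_natCast_atTop_atTop)
    have := (hlim.sub_const 1).div_const (1 - s)
    convert this using 2
    field_simp
    ring
  have : ∑' n : ℕ, aux_T n s = 1 / (s - 1) - ∑' n : ℕ, 1 / (((n + 1 : ℕ) : ℂ) + 1) ^ s := by
    rw [← hsum.2, ← hsum.1.tsum_sub hz2]
    refine tsum_congr fun n => ?_
    simp only [aux_T, Complex.cpow_neg]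
    push_cast
    rw [show (n : ℂ) + 1 + 1 = n + 2 by ring]
    ring
  rw [this, hz1]
  ring


lemma aux_zeta_ext (s : ℂ) (hs : 1 / 2 < s.re) (ht : 0 < s.im) :
    riemannZeta s = 1 + 1 / (s - 1) - ∑' n : ℕ, aux_T n s := by
  set R := ‖s‖ + 3 with hR
  set U : Set ℂ := ({z : ℂ | 1 / 2 < z.re} ∩ {z : ℂ | 0 < z.im}) ∩ Metric.ball 0 R with hU
  have hUo : IsOpen U := ((isOpen_lt continuous_const Complex.continuous_re).inter
    (isOpen_lt continuous_const Complex.continuous_im)).inter Metric.isOpen_ball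
  have hUc : IsPreconnected U := (((convex_halfSpace_re_gt _).inter (convex_halfSpace_im_gt _)).inter
    (convex_ball _ _)).isPreconnected
  have hne : ∀ z ∈ U, z ≠ 1 := by
    rintro z ⟨⟨_, h2⟩, _⟩ rfl
    simp at h2
  have hz0 : (2 + Complex.I) ∈ U := by
    refine ⟨⟨?_, ?_⟩, ?_⟩
    · simp; norm_num
    · simp
    · rw [mem_ball_zero_iff]
      calc ‖2 + Complex.I‖ ≤ ‖(2:ℂ)‖ + ‖Complex.I‖ := norm_add_le _ _
        _ = 3 := by simp; norm_num
        _ < R := by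
          have : 0 < ‖s‖ := norm_pos_iff.2 (by rintro rfl; simp at ht)
          linarith
  have hsU : s ∈ U := ⟨⟨hs, ht⟩, by rw [mem_ball_zero_iff]; linarith⟩
  have d1 : DifferentiableOn ℂ riemannZeta U := fun z hz =>
    (differentiableAt_riemannZeta (hne z hz)).differentiableWithinAt
  have d2 : DifferentiableOn ℂ (fun z => 1 + 1 / (z - 1) - ∑' n : ℕ, aux_T n z) U := by
    refine DifferentiableOn.sub ?_ ?_
    · intro z hz
      have := sub_ne_zero.2 (hne z hz)
      exact DifferentiableAt.differentiableWithinAt (by fun_prop (disch := assumption))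
    · refine Complex.differentiableOn_tsum_of_summable_norm
        (u := fun n : ℕ => R * ((n + 1 : ℕ) : ℝ) ^ (-(3 / 2) : ℝ)) ?_ ?_ hUo ?_
      · apply Summable.mul_left
        exact (summable_nat_add_iff 1).2 (Real.summable_nat_rpow.2 (by norm_num))
      · intro n z hz
        have h1 : 1 - z ≠ 0 := sub_ne_zero.2 (hne z hz).symm
        have hn1 : (((n + 1 : ℝ) : ℂ)) ≠ 0 := by
          have : (n + 1 : ℝ) ≠ 0 := by positivity
          exact_mod_cast this
        have hn2 : (((n + 2 : ℝ) : ℂ)) ≠ 0 := by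
          have : (n + 2 : ℝ) ≠ 0 := by positivity
          exact_mod_cast this
        have e1 : DifferentiableAt ℂ (fun z : ℂ => (((n + 1 : ℝ) : ℂ)) ^ (1 - z)) z :=
          DifferentiableAt.const_cpow (by fun_prop) (Or.inl hn1)
        have e2 : DifferentiableAt ℂ (fun z : ℂ => (((n + 2 : ℝ) : ℂ)) ^ (1 - z)) z :=
          DifferentiableAt.const_cpow (by fun_prop) (Or.inl hn2)
        have e3 : DifferentiableAt ℂ (fun z : ℂ => (((n + 2 : ℝ) : ℂ)) ^ (- z)) z :=
          DifferentiableAt.const_cpow (by fun_prop) (Or.inl hn2)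
        exact (((e2.sub e1).div (by fun_prop) h1).sub e3).differentiableWithinAt
      · intro n z hz
        have hzr : (1 : ℝ) / 2 < z.re := hz.1.1
        refine (aux_T_bound2 n z (hne z hz) (by linarith)).trans ?_
        have h1 : ‖z‖ ≤ R := (mem_ball_zero_iff.1 hz.2).le
        have h2 : (n + 1 : ℝ) ^ (-z.re - 1) ≤ ((n + 1 : ℕ) : ℝ) ^ (-(3 / 2) : ℝ) := by
          push_cast
          exact Real.rpow_le_rpow_of_exponent_le (by linarith [Nat.cast_nonneg (α := ℝ) n]) (by linarith)
        gcongr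
  have := AnalyticOnNhd.eqOn_of_preconnected_of_eventuallyEq (d1.analyticOnNhd hUo)
    (d2.analyticOnNhd hUo) hUc hz0 ?_
  · exact this hsU
  · have : {z : ℂ | 1 < z.re} ∈ nhds (2 + Complex.I) :=
      (isOpen_lt continuous_const Complex.continuous_re).mem_nhds (by simp)
    filter_upwards [this] with z hz
    exact aux_zeta_sum z hz

lemma aux_zeta_upper : ∃ C : ℝ, 0 < C ∧ ∀ s : ℂ, 31 / 32 ≤ s.re → s.re ≤ 4 → 1 / 2 ≤ |s.im| →
    ‖riemannZeta s‖ ≤ C * |s.im| ^ (1 / 16 : ℝ) := by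
  have hsum : Summable (fun n : ℕ => ((n + 1 : ℝ)) ^ (-(33 / 32) : ℝ)) := by
    have := (summable_nat_add_iff 1).2 ((Real.summable_nat_rpow (p := -(33/32))).2 (by norm_num))
    simpa using this
  set S := ∑' n : ℕ, ((n + 1 : ℝ)) ^ (-(33 / 32) : ℝ) with hS
  have hS0 : 0 ≤ S := tsum_nonneg fun n => by positivity
  have main : ∀ s : ℂ, 31 / 32 ≤ s.re → s.re ≤ 4 → 1 / 2 ≤ s.im →
      ‖riemannZeta s‖ ≤ (6 + 18 * S) * |s.im| ^ (1 / 16 : ℝ) := by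
    intro s h1 h2 h3
    have hs1 : s ≠ 1 := by rintro rfl; simp at h3; linarith
    rw [aux_zeta_ext s (by linarith) (by linarith), abs_of_pos (by linarith)]
    have hns : ‖s‖ ≤ 9 * s.im := by
      have := Complex.norm_le_abs_re_add_abs_im s
      rw [abs_of_pos (by linarith : 0 < s.re), abs_of_pos (by linarith : 0 < s.im)] at this
      linarith
    have hsm : 1 / 2 ≤ ‖s - 1‖ := by
      have := Complex.abs_im_le_norm (s - 1)
      simp only [Complex.sub_im, Complex.one_im, sub_zero] at this
      exact h3.trans ((le_abs_self _).trans this)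
    have ht : 1 / 2 ≤ s.im ^ (1 / 16 : ℝ) := by
      calc (1 / 2 : ℝ) = (1 / 2) ^ (1 : ℝ) := by simp
        _ ≤ (1 / 2) ^ (1 / 16 : ℝ) :=
          Real.rpow_le_rpow_of_exponent_ge (by norm_num) (by norm_num) (by norm_num)
        _ ≤ _ := by gcongr
    have hT : ‖∑' n : ℕ, aux_T n s‖ ≤ 2 * ‖s‖ ^ (1 / 16 : ℝ) * S := by
      rw [hS, ← tsum_mul_left]
      exact tsum_of_norm_bounded (hsum.mul_left _).hasSum (fun n => aux_T_bound3 n s hs1 h1)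
    have hsp : ‖s‖ ^ (1 / 16 : ℝ) ≤ 9 * s.im ^ (1 / 16 : ℝ) := by
      calc ‖s‖ ^ (1 / 16 : ℝ) ≤ (9 * s.im) ^ (1 / 16 : ℝ) := by gcongr
        _ = 9 ^ (1 / 16 : ℝ) * s.im ^ (1 / 16 : ℝ) := Real.mul_rpow (by norm_num) (by linarith)
        _ ≤ 9 ^ (1 : ℝ) * s.im ^ (1 / 16 : ℝ) := by
          gcongr
          · norm_num
          · norm_num
        _ = _ := by simp
    have h4 : ‖1 / (s - 1)‖ ≤ 2 := by
      rw [norm_div, norm_one, div_le_iff₀ (by linarith)]; linarith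
    calc ‖1 + 1 / (s - 1) - ∑' n : ℕ, aux_T n s‖ ≤ ‖(1:ℂ)‖ + ‖1 / (s - 1)‖ + ‖∑' n : ℕ, aux_T n s‖ :=
          (norm_sub_le _ _).trans (by gcongr; exact norm_add_le _ _)
      _ ≤ 1 + 2 + 2 * (9 * s.im ^ (1 / 16 : ℝ)) * S := by
          rw [norm_one]
          gcongr
          exact hT.trans (by gcongr)
      _ ≤ _ := by nlinarith
  refine ⟨6 + 18 * S, by linarith, fun s h1 h2 h3 => ?_⟩
  rcases le_total 0 s.im with h | h
  · rw [abs_of_nonneg h] at h3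
    exact main s h1 h2 h3
  · rw [abs_of_nonpos h] at h3
    have := main (starRingEnd ℂ s) (by simpa using h1) (by simpa using h2) (by simpa using h3)
    rw [riemannZeta_conj] at this
    simpa using this

lemma aux_zeta_deriv : ∃ C : ℝ, 0 < C ∧ ∀ s : ℂ, 1 ≤ s.re → s.re ≤ 3 → 1 ≤ |s.im| →
    ‖deriv riemannZeta s‖ ≤ C * |s.im| ^ (1 / 16 : ℝ) := by
  obtain ⟨C, hC, h⟩ := aux_zeta_upper
  refine ⟨C * 2 * 32, by positivity, fun s h1 h2 h3 => ?_⟩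
  have hz : ∀ z ∈ Metric.closedBall s (1 / 32), |z.re - s.re| ≤ 1 / 32 ∧ |z.im - s.im| ≤ 1 / 32 := by
    intro z hz
    rw [mem_closedBall_iff_norm] at hz
    exact ⟨(Complex.abs_re_le_norm (z - s)).trans hz, (Complex.abs_im_le_norm (z - s)).trans hz⟩
  have hzi : ∀ z ∈ Metric.closedBall s (1 / 32), 1 / 2 ≤ |z.im| ∧ |z.im| ≤ 2 * |s.im| := by
    intro z hzz
    have := (hz z hzz).2
    have a1 := abs_sub_abs_le_abs_sub z.im s.im
    have a2 := abs_sub_abs_le_abs_sub s.im z.im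
    rw [abs_sub_comm] at a2
    constructor <;> linarith
  have := Complex.norm_deriv_le_of_forall_mem_sphere_norm_le (f := riemannZeta) (c := s) (R := 1 / 32)
    (C := C * (2 * |s.im| ^ (1 / 16 : ℝ))) (by norm_num) ?_ ?_
  · refine this.trans (le_of_eq ?_)
    field_simp
  · apply DifferentiableOn.diffContOnCl
    rw [closure_ball _ (by norm_num)]
    intro z hzz
    refine (differentiableAt_riemannZeta ?_).differentiableWithinAt
    rintro rfl
    have := (hzi 1 hzz).1
    simp at this
    linarith
  · intro z hzz
    have hzz' := Metric.sphere_subset_closedBall hzz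
    have b1 := hz z hzz'
    have b2 := hzi z hzz'
    rw [abs_le] at b1
    refine (h z (by linarith) (by linarith) b2.1).trans ?_
    gcongr
    calc |z.im| ^ (1 / 16 : ℝ) ≤ (2 * |s.im|) ^ (1 / 16 : ℝ) := by gcongr; exact b2.2
      _ = 2 ^ (1 / 16 : ℝ) * |s.im| ^ (1 / 16 : ℝ) := Real.mul_rpow (by norm_num) (by positivity)
      _ ≤ 2 ^ (1 : ℝ) * |s.im| ^ (1 / 16 : ℝ) := by
          gcongr
          · norm_num
          · norm_num
      _ = _ := by simp


lemma aux_341 (x : ℝ) (hx : 0 < x) (y : ℝ) :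
    1 ≤ ‖riemannZeta (1 + x)‖ ^ 3 * ‖riemannZeta (1 + x + Complex.I * y)‖ ^ 4 *
      ‖riemannZeta (1 + x + 2 * Complex.I * y)‖ := by
  have := DirichletCharacter.norm_LFunction_product_ge_one (N := 1) (1 : DirichletCharacter ℂ 1) hx y
  simpa [DirichletCharacter.LFunction_modOne_eq, DirichletCharacter.LFunctionTrivChar] using this

lemma aux_zeta_real : ∃ D : ℝ, 0 < D ∧ ∀ x : ℝ, 0 < x → x ≤ 1 → ‖riemannZeta (1 + x)‖ ≤ D / x := by
  obtain ⟨D, hD⟩ := (isCompact_Icc (a := (0:ℝ)) (b := 1)).exists_bound_of_continuousOn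
    (f := fun x : ℝ => riemannZeta₀ (1 + x)) (by
      have := differentiable_riemannZeta₀.continuous
      fun_prop)
  have hD0 : 0 ≤ D := (norm_nonneg _).trans (hD 0 (by simp))
  refine ⟨1 + D, by linarith, fun x hx hx1 => ?_⟩
  have hne : (1 + x : ℂ) ≠ 1 := by simpa using hx.ne'
  rw [riemannZeta_eq_inv_sub_add hne, add_sub_cancel_left]
  refine (norm_add_le _ _).trans ?_
  rw [norm_inv, Complex.norm_of_nonneg hx.le, add_div]
  have : D ≤ D / x := by rw [le_div_iff₀ hx]; nlinarith
  have := hD x ⟨hx.le, hx1⟩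
  rw [one_div]
  linarith

lemma aux_zeta_lower : ∃ c : ℝ, 0 < c ∧ ∀ s : ℂ, 1 < s.re → s.re ≤ 2 → 1 ≤ |s.im| →
    c ≤ ‖riemannZeta s‖ * (|s.im| ^ (1 / 16 : ℝ)) ^ 4 := by
  obtain ⟨D, hD, hDb⟩ := aux_zeta_real
  obtain ⟨C, hC, hCb⟩ := aux_zeta_upper
  obtain ⟨C', hC', hCb'⟩ := aux_zeta_deriv
  set c1 : ℝ := 1 / (D ^ 3 * (C * 2)) with hc1
  have hc1p : 0 < c1 := by positivity
  have key : ∀ x y : ℝ, 0 < x → x ≤ 1 → 1 ≤ |y| →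
      c1 * x ^ 3 ≤ ‖riemannZeta (1 + x + Complex.I * y)‖ ^ 4 * |y| ^ (1 / 16 : ℝ) := by
    intro x y hx hx1 hy
    have h1 := aux_341 x hx y
    have h2 := hDb x hx hx1
    have h3 := hCb (1 + x + 2 * Complex.I * y) (by simp; linarith) (by simp; linarith) (by
      simp [abs_mul]; linarith)
    have h4 : |(1 + x + 2 * Complex.I * y : ℂ).im| ^ (1 / 16 : ℝ) ≤ 2 * |y| ^ (1 / 16 : ℝ) := by
      have : (1 + x + 2 * Complex.I * y : ℂ).im = 2 * y := by simp
      rw [this, abs_mul, Real.mul_rpow (by positivity) (by positivity)]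
      gcongr
      calc |(2:ℝ)| ^ (1 / 16 : ℝ) ≤ |(2:ℝ)| ^ (1 : ℝ) :=
            Real.rpow_le_rpow_of_exponent_le (by norm_num) (by norm_num)
        _ = 2 := by simp
    have h5 : 1 ≤ (D / x) ^ 3 * ‖riemannZeta (1 + x + Complex.I * y)‖ ^ 4 * (C * (2 * |y| ^ (1 / 16 : ℝ))) := by
      refine h1.trans ?_
      gcongr
      exact h3.trans (by gcongr)
    have h6 : (D / x) ^ 3 * ‖riemannZeta (1 + x + Complex.I * y)‖ ^ 4 * (C * (2 * |y| ^ (1 / 16 : ℝ)))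
      = (‖riemannZeta (1 + x + Complex.I * y)‖ ^ 4 * |y| ^ (1 / 16 : ℝ)) / (c1 * x ^ 3) := by
      rw [hc1]; field_simp
    rw [h6, le_div_iff₀ (by positivity)] at h5
    linarith
  set c2 := min c1 1 with hc2
  have hc2p : 0 < c2 := lt_min hc1p one_pos
  have hc2le : c2 ^ 4 ≤ c1 := by
    calc c2 ^ 4 ≤ c2 ^ 1 := pow_le_pow_of_le_one hc2p.le (min_le_right _ _) (by norm_num)
      _ ≤ c1 := by rw [pow_one]; exact min_le_left _ _
  set k := min 1 (c2 / (2 * C')) with hk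
  have hkp : 0 < k := lt_min one_pos (by positivity)
  have hk1 : k ≤ 1 := min_le_left _ _
  have hk2 : C' * k ≤ c2 / 2 := by
    have : k ≤ c2 / (2 * C') := min_le_right _ _
    rw [le_div_iff₀ (by positivity)] at this
    linarith
  refine ⟨c2 * k ^ 3 / 2, by positivity, fun s hs1 hs2 hs3 => ?_⟩
  set y := s.im with hy
  set M := |y| ^ (1 / 16 : ℝ) with hM
  have hM1 : 1 ≤ M := Real.one_le_rpow hs3 (by norm_num)
  have hM0 : 0 < M := by linarith
  set δ := k ^ 4 / M ^ 5 with hδ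
  have hδp : 0 < δ := by positivity
  have hδ1 : δ ≤ 1 := by
    rw [hδ, div_le_one (by positivity)]
    exact (pow_le_one₀ hkp.le hk1).trans (one_le_pow₀ hM1)
  have key2 : ∀ x : ℝ, δ ≤ x → x ≤ 1 → c2 * k ^ 3 ≤ ‖riemannZeta (1 + x + Complex.I * y)‖ * M ^ 4 := by
    intro x hx hx1
    have hx0 : 0 < x := hδp.trans_le hx
    have h1 := key x y hx0 hx1 hs3
    refine le_of_pow_le_pow_left₀ (n := 4) (by norm_num) (by positivity) ?_
    calc (c2 * k ^ 3) ^ 4 = c2 ^ 4 * δ ^ 3 * M ^ 15 := by rw [hδ]; field_simp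
      _ ≤ c1 * x ^ 3 * M ^ 15 := by gcongr
      _ ≤ ‖riemannZeta (1 + x + Complex.I * y)‖ ^ 4 * M * M ^ 15 := by gcongr
      _ = _ := by ring
  have hs : s = 1 + ((s.re - 1 : ℝ) : ℂ) + Complex.I * y := by
    apply Complex.ext <;> simp [hy]
  have hck : 0 < c2 * k ^ 3 := by positivity
  rcases le_total δ (s.re - 1) with h | h
  · have := key2 (s.re - 1) h (by linarith)
    rw [← hs] at this
    linarith
  · have h0 := key2 δ le_rfl hδ1
    set z : ℂ := 1 + δ + Complex.I * y with hz
    have hlip : ‖riemannZeta z - riemannZeta s‖ ≤ C' * M * ‖z - s‖ := by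
      refine Convex.norm_image_sub_le_of_norm_deriv_le (𝕜 := ℂ) (s := Set.Icc 1 3 ×ℂ {y}) ?_ ?_
        (((convex_Icc (1 : ℝ) 3).linear_preimage Complex.reLm).inter ((convex_singleton y).linear_preimage Complex.imLm)) ?_ ?_
      · rintro u hu
        rw [Complex.mem_reProdIm] at hu
        apply differentiableAt_riemannZeta
        rintro rfl
        have := hu.2
        simp at this
        rw [← this] at hs3
        simp at hs3
        linarith
      · rintro u hu
        rw [Complex.mem_reProdIm] at hu
        have := hCb' u hu.1.1 hu.1.2 (by rw [hu.2]; exact hs3)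
        rwa [hu.2] at this
      · rw [Complex.mem_reProdIm]; constructor
        · constructor <;> linarith
        · rfl
      · rw [Complex.mem_reProdIm, hz]; constructor
        · constructor <;> simp <;> linarith
        · simp
    have hzs : ‖z - s‖ ≤ δ := by
      have : z - s = ((δ - (s.re - 1) : ℝ) : ℂ) := by
        rw [hz]; nth_rewrite 1 [hs]; push_cast; ring
      rw [this, Complex.norm_of_nonneg (by linarith)]
      linarith
    have h2 : ‖riemannZeta z‖ ≤ ‖riemannZeta s‖ + C' * M * δ := by
      have := norm_sub_norm_le (riemannZeta z) (riemannZeta s)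
      have : C' * M * ‖z - s‖ ≤ C' * M * δ := by gcongr
      linarith
    have h3 : C' * M * δ * M ^ 4 = C' * k * k ^ 3 := by rw [hδ]; field_simp
    have h4 : C' * k * k ^ 3 ≤ c2 / 2 * k ^ 3 := by gcongr
    have h5 : ‖riemannZeta z‖ * M ^ 4 ≤ (‖riemannZeta s‖ + C' * M * δ) * M ^ 4 := by gcongr
    linarith


noncomputable def aux_R (s : ℂ) : ℂ := -riemannZeta₀ (1 + s) / riemannZeta₁ (1 + s)

lemma aux_z1_ne (s : ℂ) (hs : 0 ≤ s.re) : riemannZeta₁ (1 + s) ≠ 0 := by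
  by_cases h : s = 0
  · simp [h]
  · have hne : (1 + s : ℂ) ≠ 1 := by simpa using h
    have := riemannZeta_ne_zero_of_one_le_re (s := 1 + s) (by simpa using hs)
    rw [riemannZeta_eq_inv_sub_mul hne] at this
    exact right_ne_zero_of_mul this

lemma aux_R_eq (s : ℂ) (h : s ≠ 0) (hz : riemannZeta (1 + s) ≠ 0) :
    aux_R s = (s ^ 2 * riemannZeta (1 + s))⁻¹ - s⁻¹ := by
  have hne : (1 + s : ℂ) ≠ 1 := by simpa using h
  have e0 := riemannZeta_eq_inv_sub_add hne
  have e1 := riemannZeta_eq_inv_sub_mul hne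
  rw [add_sub_cancel_left] at e0 e1
  have e0' : riemannZeta₀ (1 + s) = riemannZeta (1 + s) - s⁻¹ := by rw [e0]; ring
  have e1' : riemannZeta₁ (1 + s) = s * riemannZeta (1 + s) := by rw [e1]; field_simp
  rw [aux_R, e0', e1']
  field_simp
  ring

lemma aux_R_deriv_bound : ∃ C : ℝ, 0 < C ∧ ∀ s : ℂ, 0 < s.re → s.re ≤ 1 →
    ‖deriv aux_R s‖ ≤ C * (1 + |s.im|) ^ (-(11 / 8) : ℝ) := by
  obtain ⟨c, hc, hcb⟩ := aux_zeta_lower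
  obtain ⟨C', hC', hCb'⟩ := aux_zeta_deriv
  have hd0 := differentiable_riemannZeta₀
  have hd1 := differentiable_riemannZeta₁
  set U : Set ℂ := {s | riemannZeta₁ (1 + s) ≠ 0} with hU
  have hUo : IsOpen U := by
    apply isOpen_ne_fun
    · have := hd1.continuous; fun_prop
    · fun_prop
  have hdU : DifferentiableOn ℂ aux_R U := by
    intro s hs
    have h0 : DifferentiableAt ℂ (fun s => -riemannZeta₀ (1 + s)) s := by fun_prop
    have h1 : DifferentiableAt ℂ (fun s => riemannZeta₁ (1 + s)) s := by fun_prop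
    exact (h0.div h1 hs).differentiableWithinAt
  have hK : IsCompact (Set.Icc (0:ℝ) 1 ×ℂ Set.Icc (-1:ℝ) 1) := isCompact_Icc.reProdIm isCompact_Icc
  have hKU : (Set.Icc (0:ℝ) 1 ×ℂ Set.Icc (-1:ℝ) 1) ⊆ U := by
    intro s hs
    rw [Complex.mem_reProdIm] at hs
    exact aux_z1_ne s hs.1.1
  obtain ⟨B, hB⟩ := hK.exists_bound_of_continuousOn (f := deriv aux_R)
    ((hdU.deriv hUo).continuousOn.mono hKU)
  have hB0 : 0 ≤ B := (norm_nonneg _).trans (hB 0 (by rw [Complex.mem_reProdIm]; simp))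
  set K := 2 / c + C' / c ^ 2 + 1 with hKdef
  have hKp : 0 < K := by positivity
  have h4 : (2 : ℝ) ^ (11 / 8 : ℝ) ≤ 4 := by
    calc (2 : ℝ) ^ (11 / 8 : ℝ) ≤ 2 ^ (2 : ℝ) :=
          Real.rpow_le_rpow_of_exponent_le (by norm_num) (by norm_num)
      _ = 4 := by norm_num
  refine ⟨4 * B + 4 * K, by positivity, fun s hs hs1 => ?_⟩
  set T := |s.im| with hT
  have hT0 : 0 ≤ T := abs_nonneg _
  have hpp : 0 < (1 + T) ^ (-(11 / 8) : ℝ) := by positivity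
  rcases le_total T 1 with h | h
  · have h1 := hB s (by
      rw [Complex.mem_reProdIm]
      exact ⟨⟨hs.le, hs1⟩, abs_le.1 h⟩)
    have h2 : (1 : ℝ) ≤ 4 * (1 + T) ^ (-(11 / 8) : ℝ) := by
      rw [Real.rpow_neg (by positivity), ← div_eq_mul_inv, le_div_iff₀ (by positivity), one_mul]
      refine le_trans ?_ h4
      gcongr
      linarith
    nlinarith [mul_nonneg hB0 hT0]
  · have hTp : 0 < T := by linarith
    have hsT : T ≤ ‖s‖ := Complex.abs_im_le_norm s
    have hs0 : s ≠ 0 := by rintro rfl; simp at hs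
    have hz : riemannZeta (1 + s) ≠ 0 := riemannZeta_ne_zero_of_one_le_re (by simpa using hs.le)
    have hne : (1 + s : ℂ) ≠ 1 := by simpa using hs0
    have hzd : HasDerivAt (fun z => riemannZeta (1 + z)) (deriv riemannZeta (1 + s)) s := by
      have := (differentiableAt_riemannZeta hne).hasDerivAt
      exact HasDerivAt.comp_const_add 1 s this
    have hD : HasDerivAt (fun z => (z ^ 2 * riemannZeta (1 + z))⁻¹ - z⁻¹)
        (-(2 * s * riemannZeta (1 + s) + s ^ 2 * deriv riemannZeta (1 + s)) / (s ^ 2 * riemannZeta (1 + s)) ^ 2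
          - (-(s ^ 2)⁻¹)) s := by
      have h2 : HasDerivAt (fun z : ℂ => z ^ 2) (2 * s) s := by simpa using hasDerivAt_pow 2 s
      exact ((h2.mul hzd).inv (mul_ne_zero (pow_ne_zero _ hs0) hz)).sub (hasDerivAt_inv hs0)
    have hev : aux_R =ᶠ[nhds s] (fun z => (z ^ 2 * riemannZeta (1 + z))⁻¹ - z⁻¹) := by
      filter_upwards [isOpen_ne.mem_nhds hs0, hzd.continuousAt.eventually_ne hz] with z h1 h2
      exact aux_R_eq z h1 h2
    rw [(hD.congr_of_eventuallyEq hev).deriv]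
    set M := T ^ (1 / 16 : ℝ) with hM
    have hM1 : 1 ≤ M := Real.one_le_rpow h (by norm_num)
    have hM0 : 0 < M := by linarith
    have hl : c ≤ ‖riemannZeta (1 + s)‖ * M ^ 4 := by
      have := hcb (1 + s) (by simpa using hs) (by simp; linarith) (by simpa using h)
      rwa [show (1 + s).im = s.im by simp] at this
    have hu : ‖deriv riemannZeta (1 + s)‖ ≤ C' * M := by
      have := hCb' (1 + s) (by simpa using hs.le) (by simp; linarith) (by simpa using h)
      rwa [show (1 + s).im = s.im by simp] at this
    have hZ : 0 < ‖riemannZeta (1 + s)‖ := norm_pos_iff.2 hz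
    have hZi : ‖riemannZeta (1 + s)‖⁻¹ ≤ M ^ 4 / c := by
      rw [inv_le_comm₀ hZ (by positivity), inv_div, div_le_iff₀ (by positivity)]
      exact hl
    have hSi : ‖s‖⁻¹ ≤ T⁻¹ := by gcongr
    have hSi1 : ‖s‖⁻¹ ≤ 1 := hSi.trans (inv_le_one_of_one_le₀ h)
    have hsn : 0 < ‖s‖ := norm_pos_iff.2 hs0
    have e : -(2 * s * riemannZeta (1 + s) + s ^ 2 * deriv riemannZeta (1 + s)) / (s ^ 2 * riemannZeta (1 + s)) ^ 2
          - (-(s ^ 2)⁻¹) = (s⁻¹) ^ 2 * (1 - (2 * s⁻¹ * (riemannZeta (1 + s))⁻¹ +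
            deriv riemannZeta (1 + s) * ((riemannZeta (1 + s))⁻¹) ^ 2)) := by
      field_simp
      ring
    rw [e]
    have hM4 : M ^ 4 ≤ M ^ 10 := pow_le_pow_right₀ hM1 (by norm_num)
    have hM9 : M ^ 9 ≤ M ^ 10 := pow_le_pow_right₀ hM1 (by norm_num)
    have hM10 : 1 ≤ M ^ 10 := one_le_pow₀ hM1
    have b1 : ‖(2 : ℂ) * s⁻¹ * (riemannZeta (1 + s))⁻¹‖ ≤ 2 / c * M ^ 10 := by
      rw [norm_mul, norm_mul, norm_inv, norm_inv]
      calc ‖(2:ℂ)‖ * ‖s‖⁻¹ * ‖riemannZeta (1 + s)‖⁻¹ ≤ 2 * 1 * (M ^ 4 / c) := by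
            gcongr
            simp
        _ = 2 / c * M ^ 4 := by ring
        _ ≤ _ := by gcongr
    have b2 : ‖deriv riemannZeta (1 + s) * ((riemannZeta (1 + s))⁻¹) ^ 2‖ ≤ C' / c ^ 2 * M ^ 10 := by
      rw [norm_mul, norm_pow, norm_inv]
      calc ‖deriv riemannZeta (1 + s)‖ * (‖riemannZeta (1 + s)‖⁻¹) ^ 2 ≤ C' * M * (M ^ 4 / c) ^ 2 := by
            gcongr
        _ = C' / c ^ 2 * M ^ 9 := by field_simp
        _ ≤ _ := by gcongr
    have b3 : ‖(1 : ℂ) - (2 * s⁻¹ * (riemannZeta (1 + s))⁻¹ +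
            deriv riemannZeta (1 + s) * ((riemannZeta (1 + s))⁻¹) ^ 2)‖ ≤ K * M ^ 10 := by
      refine (norm_sub_le _ _).trans ?_
      rw [norm_one]
      have := norm_add_le (2 * s⁻¹ * (riemannZeta (1 + s))⁻¹) (deriv riemannZeta (1 + s) * ((riemannZeta (1 + s))⁻¹) ^ 2)
      rw [hKdef]
      nlinarith
    have hfin : (T⁻¹) ^ 2 * M ^ 10 = T ^ (-(11 / 8) : ℝ) := by
      rw [hM, ← Real.rpow_natCast (T ^ (1 / 16 : ℝ)) 10, ← Real.rpow_mul hT0, inv_pow, ← Real.rpow_natCast T 2,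
        ← Real.rpow_neg hT0, ← Real.rpow_add hTp]
      norm_num
    have hfin2 : T ^ (-(11 / 8) : ℝ) ≤ 4 * (1 + T) ^ (-(11 / 8) : ℝ) := by
      rw [Real.rpow_neg (by positivity), Real.rpow_neg (by positivity), ← div_eq_mul_inv, le_div_iff₀ (by positivity),
        inv_mul_le_iff₀ (by positivity)]
      calc (1 + T) ^ (11 / 8 : ℝ) ≤ (2 * T) ^ (11 / 8 : ℝ) := by gcongr; linarith
        _ = 2 ^ (11 / 8 : ℝ) * T ^ (11 / 8 : ℝ) := Real.mul_rpow (by norm_num) hT0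
        _ ≤ 4 * T ^ (11 / 8 : ℝ) := by gcongr
        _ = _ := by ring
    rw [norm_mul, norm_pow, norm_inv]
    calc (‖s‖⁻¹) ^ 2 * ‖(1 : ℂ) - (2 * s⁻¹ * (riemannZeta (1 + s))⁻¹ +
            deriv riemannZeta (1 + s) * ((riemannZeta (1 + s))⁻¹) ^ 2)‖ ≤ (T⁻¹) ^ 2 * (K * M ^ 10) := by gcongr
      _ = K * T ^ (-(11 / 8) : ℝ) := by rw [← hfin]; ring
      _ ≤ K * (4 * (1 + T) ^ (-(11 / 8) : ℝ)) := by gcongr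
      _ ≤ _ := by nlinarith [mul_nonneg hB0 hpp.le]


noncomputable def aux_phi (t : ℝ) : ℂ :=
  Set.indicator (Set.Ioc (0:ℝ) 1) (fun t => ((-Real.log t : ℝ) : ℂ)) t

lemma aux_ind_top (a : ℝ) (f : ℝ → ℂ) (hf : ∀ t, 1 < t → f t = 0) :
    f =O[Filter.atTop] (fun t : ℝ => t ^ (-a)) := by
  have : f =ᶠ[Filter.atTop] (fun _ => (0:ℂ)) := by
    filter_upwards [Filter.eventually_gt_atTop 1] with t ht
    exact hf t ht
  exact (Asymptotics.isBigO_zero _ _).congr' this.symm Filter.EventuallyEq.rfl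

lemma aux_phi_mellin (s : ℂ) (hs : 0 < s.re) :
    MellinConvergent aux_phi s ∧ mellin aux_phi s = 1 / s ^ 2 := by
  have hs0 : s ≠ 0 := by rintro rfl; simp at hs
  have h := mellin_hasDerivAt_of_isBigO_rpow (a := s.re + 1) (b := 0) (s := s)
    (f := Set.indicator (Set.Ioc (0:ℝ) 1) (fun _ => (1 : ℂ))) ?_ ?_ (by linarith) ?_ hs
  · have e : (fun t : ℝ => Real.log t • Set.indicator (Set.Ioc (0:ℝ) 1) (fun _ => (1 : ℂ)) t) = fun t => (-1 : ℂ) • aux_phi t := by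
      funext t
      by_cases ht : t ∈ Set.Ioc (0:ℝ) 1 <;> simp [aux_phi, ht]
    rw [e] at h
    have h2 : HasDerivAt (mellin (Set.indicator (Set.Ioc (0:ℝ) 1) (fun _ => (1 : ℂ)))) (-(s ^ 2)⁻¹) s := by
      refine (hasDerivAt_inv hs0).congr_of_eventuallyEq ?_
      filter_upwards [(isOpen_lt continuous_const Complex.continuous_re).mem_nhds hs] with z hz
      rw [(hasMellin_one_Ioc hz).2, one_div]
    have h3 := h.2.unique h2
    rw [mellin_const_smul] at h3
    have h4 := h.1.const_smul (-1 : ℂ)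
    constructor
    · simpa using h4
    · rw [one_div]
      have : mellin aux_phi s = - ((-1 : ℂ) • mellin aux_phi s) := by simp
      rw [this, h3, neg_neg]
  · apply MeasureTheory.IntegrableOn.locallyIntegrableOn
    apply MeasureTheory.Integrable.integrableOn
    rw [MeasureTheory.integrable_indicator_iff measurableSet_Ioc]
    exact MeasureTheory.integrableOn_const (by simp)
  · apply aux_ind_top
    intro t ht
    simp [ht]
  · refine Asymptotics.IsBigO.of_bound 1 (Filter.Eventually.of_forall fun t => ?_)
    by_cases ht : t ∈ Set.Ioc (0:ℝ) 1 <;> simp [ht]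

lemma aux_phi_meas : Measurable aux_phi := by
  unfold aux_phi
  apply Measurable.indicator _ measurableSet_Ioc
  fun_prop

lemma aux_phi_cont (t : ℝ) (ht : 0 < t) : ContinuousAt aux_phi t := by
  have : aux_phi =ᶠ[nhds t] fun u => ((max 0 (-Real.log u) : ℝ) : ℂ) := by
    filter_upwards [lt_mem_nhds ht] with u hu
    by_cases h : u ≤ 1
    · have : Real.log u ≤ 0 := Real.log_nonpos hu.le h
      simp [aux_phi, hu, h, this]
    · have : 0 ≤ Real.log u := Real.log_nonneg (by linarith)
      simp [aux_phi, h, this]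
  refine ContinuousAt.congr ?_ this.symm
  have h0 := ht.ne'
  refine Complex.continuous_ofReal.continuousAt.comp ?_
  exact continuousAt_const.max (Real.continuousAt_log h0).neg

noncomputable def aux_c (m : ℕ) : ℂ := (ArithmeticFunction.moebius m : ℂ) / m

lemma aux_c_norm (m : ℕ) : ‖aux_c m‖ ≤ 1 / m := by
  rw [aux_c, norm_div, Complex.norm_natCast]
  gcongr
  rw [Complex.norm_intCast]
  exact_mod_cast ArithmeticFunction.abs_moebius_le_one

noncomputable def aux_F (t : ℝ) : ℂ := ∑' m : ℕ, aux_c m * aux_phi (m * t)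

lemma aux_phi_zero (u : ℝ) (h : u ≤ 0 ∨ 1 ≤ u) : aux_phi u = 0 := by
  rcases h with h | h
  · simp [aux_phi, h.not_gt]
  · rcases h.eq_or_lt with h | h
    · simp [aux_phi, ← h]
    · simp [aux_phi, h.not_ge]

lemma aux_F_eq (t : ℝ) (N : ℕ) (hN : 1 ≤ N * t) :
    aux_F t = ∑ m ∈ Finset.range N, aux_c m * aux_phi (m * t) := by
  apply tsum_eq_sum
  intro m hm
  rw [Finset.mem_range, not_lt] at hm
  have ht : 0 < t := by
    by_contra h
    push Not at h
    nlinarith [Nat.cast_nonneg (α := ℝ) N]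
  have : (N : ℝ) * t ≤ m * t := by gcongr
  rw [aux_phi_zero _ (Or.inr (hN.trans this)), mul_zero]

lemma aux_F_zero (t : ℝ) (h : t ≤ 0 ∨ 1 ≤ t) : aux_F t = 0 := by
  have : ∀ m : ℕ, aux_c m * aux_phi (m * t) = 0 := by
    intro m
    rcases Nat.eq_zero_or_pos m with hm | hm
    · simp [hm, aux_c]
    · have hm' : (1 : ℝ) ≤ m := by exact_mod_cast hm
      rw [aux_phi_zero, mul_zero]
      rcases h with h | h
      · left; nlinarith
      · right; nlinarith
  simp [aux_F, this]

lemma aux_F_hasSum (t : ℝ) : HasSum (fun m : ℕ => aux_c m * aux_phi (m * t)) (aux_F t) := by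
  apply Summable.hasSum
  rcases le_or_gt t 0 with h | h
  · have : ∀ m : ℕ, aux_c m * aux_phi (m * t) = 0 := by
      intro m
      rw [aux_phi_zero, mul_zero]
      left
      exact mul_nonpos_of_nonneg_of_nonpos (Nat.cast_nonneg m) h
    simp [this, summable_zero]
  · obtain ⟨N, hN⟩ := exists_nat_ge (1 / t)
    rw [div_le_iff₀ h] at hN
    apply summable_of_ne_finset_zero (s := Finset.range N)
    intro m hm
    rw [Finset.mem_range, not_lt] at hm
    have : (N : ℝ) * t ≤ m * t := by gcongr
    rw [aux_phi_zero _ (Or.inr (hN.trans this)), mul_zero]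

lemma aux_F_meas : Measurable aux_F := by
  refine measurable_of_tendsto_metrizable
    (f := fun (N : ℕ) (t : ℝ) => ∑ m ∈ Finset.range N, aux_c m * aux_phi (m * t)) ?_ ?_
  · intro N
    have := aux_phi_meas
    fun_prop
  · rw [tendsto_pi_nhds]
    intro t
    exact (aux_F_hasSum t).tendsto_sum_nat

lemma aux_F_cont (t : ℝ) (ht : 0 < t) : ContinuousAt aux_F t := by
  obtain ⟨N, hN⟩ := exists_nat_ge (2 / t)
  rw [div_le_iff₀ ht] at hN
  have : aux_F =ᶠ[nhds t] fun t => ∑ m ∈ Finset.range N, aux_c m * aux_phi (m * t) := by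
    filter_upwards [lt_mem_nhds (by linarith : t / 2 < t)] with u hu
    apply aux_F_eq
    have : (N : ℝ) * (t / 2) ≤ N * u := by gcongr
    linarith
  refine ContinuousAt.congr ?_ this.symm
  refine tendsto_finsetSum _ fun m _ => ?_
  rcases Nat.eq_zero_or_pos m with hm | hm
  · simp [hm, aux_c]
  · refine ContinuousAt.mul continuousAt_const ?_
    refine ContinuousAt.comp (g := aux_phi) (f := fun u : ℝ => (m : ℝ) * u) ?_ (by fun_prop)
    apply aux_phi_cont
    positivity

lemma aux_F_inv (x : ℝ) (hx : 1 ≤ x) : aux_F x⁻¹ = (aux_gM x : ℂ) := by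
  have hx0 : 0 < x := by linarith
  have hN : 1 ≤ ((⌊x⌋₊ + 1 : ℕ) : ℝ) * x⁻¹ := by
    rw [← div_eq_mul_inv, le_div_iff₀ hx0, one_mul]
    push_cast
    exact (Nat.lt_floor_add_one x).le
  rw [aux_F_eq _ _ hN, aux_gM]
  push_cast
  rw [Finset.range_eq_Ico, Finset.sum_eq_sum_Ico_succ_bot (by omega)]
  rw [show Finset.Ico (0+1) (⌊x⌋₊ + 1) = Finset.Icc 1 ⌊x⌋₊ by ext; simp]
  simp only [aux_c, CharP.cast_eq_zero, div_zero, zero_mul, zero_add]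
  refine Finset.sum_congr rfl fun m hm => ?_
  rw [Finset.mem_Icc] at hm
  have hm1 : (0 : ℝ) < m := by exact_mod_cast hm.1
  have hm2 : (m : ℝ) ≤ x := (Nat.cast_le.2 hm.2).trans (Nat.floor_le hx0.le)
  have hmem : (m : ℝ) * x⁻¹ ∈ Set.Ioc (0:ℝ) 1 := by
    refine ⟨by positivity, ?_⟩
    rw [← div_eq_mul_inv, div_le_one hx0]; exact hm2
  congr 1
  rw [aux_phi, Set.indicator_of_mem hmem, ← Real.log_inv]
  congr 2
  rw [mul_inv, inv_inv, div_eq_mul_inv, mul_comm]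

lemma aux_F_bound (b : ℝ) (hb : 0 < b) : ∃ C : ℝ, 0 ≤ C ∧ ∀ t, 0 < t → ‖aux_F t‖ ≤ C * t ^ (-b) := by
  have hsum : Summable (fun m : ℕ => (m : ℝ) ^ (-1 - b)) := Real.summable_nat_rpow.2 (by linarith)
  refine ⟨(∑' m : ℕ, (m : ℝ) ^ (-1 - b)) / b, by positivity, fun t ht => ?_⟩
  have hb2 : ∀ m : ℕ, ‖aux_c m * aux_phi (m * t)‖ ≤ (m : ℝ) ^ (-1 - b) * (t ^ (-b) / b) := by
    intro m
    rcases Nat.eq_zero_or_pos m with hm | hm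
    · simp [hm, aux_c]
      positivity
    · have hm' : (0 : ℝ) < m := by exact_mod_cast hm
      have hp : ‖aux_phi (m * t)‖ ≤ (m * t) ^ (-b) / b := by
        by_cases h : (m * t) ∈ Set.Ioc (0:ℝ) 1
        · rw [aux_phi, Set.indicator_of_mem h, Complex.norm_of_nonneg (by linarith [Real.log_nonpos h.1.le h.2]),
            ← Real.log_inv, Real.rpow_neg h.1.le, ← Real.inv_rpow h.1.le]
          exact Real.log_le_rpow_div (inv_nonneg.2 h.1.le) hb
        · rw [aux_phi, Set.indicator_of_notMem h, norm_zero]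
          positivity
      rw [norm_mul]
      calc ‖aux_c m‖ * ‖aux_phi (m * t)‖ ≤ (1 / m) * ((m * t) ^ (-b) / b) := by
            gcongr
            exact aux_c_norm m
        _ = _ := by
            rw [Real.mul_rpow hm'.le ht.le, sub_eq_add_neg, Real.rpow_add hm', Real.rpow_neg_one]
            ring
  have := tsum_of_norm_bounded (hsum.mul_right _).hasSum hb2
  rw [← aux_F, tsum_mul_right] at this
  refine this.trans (le_of_eq (by ring))


lemma aux_phi_norm (u : ℝ) : ((‖aux_phi u‖ : ℝ) : ℂ) = aux_phi u := by
  by_cases h : u ∈ Set.Ioc (0:ℝ) 1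
  · rw [aux_phi, Set.indicator_of_mem h, Complex.norm_of_nonneg (by linarith [Real.log_nonpos h.1.le h.2])]
  · rw [aux_phi, Set.indicator_of_notMem h]; simp

lemma aux_J (s : ℂ) (hs : 0 < s.re) (m : ℕ) (hm : 0 < m) :
    ∫ t in Set.Ioi (0:ℝ), ‖(t : ℂ) ^ (s - 1) • aux_phi (m * t)‖ = (m : ℝ) ^ (-s.re) * (1 / s.re ^ 2) := by
  have hm' : (0 : ℝ) < m := by exact_mod_cast hm
  have h1 := mellin_comp_mul_left aux_phi (s.re : ℂ) hm'
  rw [(aux_phi_mellin (s.re : ℂ) (by simpa using hs)).2] at h1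
  have h2 : ((∫ t in Set.Ioi (0:ℝ), ‖(t : ℂ) ^ (s - 1) • aux_phi (m * t)‖ : ℝ) : ℂ)
      = mellin (fun t => aux_phi (m * t)) (s.re : ℂ) := by
    rw [← integral_complex_ofReal, mellin]
    refine MeasureTheory.setIntegral_congr_fun measurableSet_Ioi fun t ht => ?_
    have ht : 0 < t := ht
    simp only [smul_eq_mul, norm_mul, Complex.ofReal_mul, aux_phi_norm]
    rw [Complex.norm_cpow_eq_rpow_re_of_pos ht, Complex.ofReal_cpow ht.le]
    simp
  rw [h1] at h2
  have h3 : (m : ℂ) ^ (-(s.re : ℂ)) • (1 / (s.re : ℂ) ^ 2) = (((m : ℝ) ^ (-s.re) * (1 / s.re ^ 2) : ℝ) : ℂ) := by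
    push_cast
    rw [Complex.ofReal_cpow hm'.le]
    simp
  exact_mod_cast h2.trans h3

lemma aux_F_mellin (s : ℂ) (hs : 0 < s.re) :
    mellin aux_F s = (s ^ 2 * riemannZeta (1 + s))⁻¹ := by
  have hconv : ∀ m : ℕ, 0 < m → MellinConvergent (fun t => aux_phi (m * t)) s := fun m hm =>
    (MellinConvergent.comp_mul_left (by exact_mod_cast hm)).2 (aux_phi_mellin s hs).1
  have e1 : ∀ m : ℕ, (fun t : ℝ => (t : ℂ) ^ (s - 1) • (aux_c m * aux_phi (m * t)))
      = fun t : ℝ => aux_c m • ((t : ℂ) ^ (s - 1) • aux_phi (m * t)) := by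
    intro m; funext t; simp only [smul_eq_mul]; ring
  have key := MeasureTheory.hasSum_integral_of_summable_integral_norm
    (μ := MeasureTheory.volume.restrict (Set.Ioi (0:ℝ)))
    (F := fun (m : ℕ) (t : ℝ) => (t : ℂ) ^ (s - 1) • (aux_c m * aux_phi (m * t))) ?_ ?_
  · have e2 : (∫ t in Set.Ioi (0:ℝ), ∑' m : ℕ, (t : ℂ) ^ (s - 1) • (aux_c m * aux_phi (m * t))) = mellin aux_F s := by
      rw [mellin]
      refine MeasureTheory.setIntegral_congr_fun measurableSet_Ioi fun t ht => ?_
      simp only [smul_eq_mul, aux_F]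
      rw [tsum_mul_left]
    rw [e2] at key
    rw [← key.tsum_eq]
    have hz : 1 < (1 + s).re := by simpa using hs
    have hL := ArithmeticFunction.LSeries_zeta_mul_Lseries_moebius hz
    rw [ArithmeticFunction.LSeries_zeta_eq_riemannZeta hz] at hL
    have hL2 : LSeries (fun n => ((ArithmeticFunction.moebius n : ℤ) : ℂ)) (1 + s) = (riemannZeta (1 + s))⁻¹ :=
      eq_inv_of_mul_eq_one_right hL
    rw [mul_inv, ← hL2, LSeries, ← tsum_mul_left]
    refine tsum_congr fun m => ?_
    rcases Nat.eq_zero_or_pos m with hm | hm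
    · simp [hm, aux_c]
    · have hm' : (0 : ℝ) < m := by exact_mod_cast hm
      have hmc : (m : ℂ) ≠ 0 := by exact_mod_cast hm.ne'
      rw [e1, MeasureTheory.integral_smul]
      change aux_c m • mellin (fun t => aux_phi (m * t)) s = _
      rw [mellin_comp_mul_left aux_phi s hm', (aux_phi_mellin s hs).2, LSeries.term_of_ne_zero hm.ne', aux_c,
        Complex.cpow_add _ _ hmc, Complex.cpow_one]
      simp only [smul_eq_mul, Complex.ofReal_natCast, Complex.cpow_neg]
      field_simp
  · intro m
    rcases Nat.eq_zero_or_pos m with hm | hm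
    · simp [hm, aux_c]
    · simp only [e1]
      exact (hconv m hm).smul (aux_c m)
  · refine Summable.of_nonneg_of_le (fun m => by positivity) (f := fun m : ℕ => (m : ℝ) ^ (-1 - s.re) * (1 / s.re ^ 2)) ?_
      ((Real.summable_nat_rpow.2 (by linarith)).mul_right _)
    intro m
    rcases Nat.eq_zero_or_pos m with hm | hm
    · simp [hm, aux_c]; positivity
    · have hm' : (0 : ℝ) < m := by exact_mod_cast hm
      have e2 : ∀ t : ℝ, ‖(t : ℂ) ^ (s - 1) • (aux_c m * aux_phi (m * t))‖ =
          ‖aux_c m‖ * ‖(t : ℂ) ^ (s - 1) • aux_phi (m * t)‖ := by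
        intro t; simp only [smul_eq_mul, norm_mul]; ring
      simp only [e2]
      rw [MeasureTheory.integral_const_mul, aux_J s hs m hm, sub_eq_add_neg, Real.rpow_add hm', Real.rpow_neg_one]
      have := aux_c_norm m
      rw [one_div] at this
      rw [mul_assoc]
      gcongr

noncomputable def aux_f (t : ℝ) : ℂ := aux_F t - Set.indicator (Set.Ioc (0:ℝ) 1) (fun _ => (1 : ℂ)) t

lemma aux_f_bound (b : ℝ) (hb : 0 < b) : ∃ C : ℝ, 0 ≤ C ∧ ∀ t, 0 < t → ‖aux_f t‖ ≤ C * t ^ (-b) := by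
  obtain ⟨C, hC, h⟩ := aux_F_bound b hb
  refine ⟨C + 1, by linarith, fun t ht => ?_⟩
  have h1 := h t ht
  have h2 : ‖Set.indicator (Set.Ioc (0:ℝ) 1) (fun _ => (1 : ℂ)) t‖ ≤ t ^ (-b) := by
    by_cases h3 : t ∈ Set.Ioc (0:ℝ) 1
    · rw [Set.indicator_of_mem h3, norm_one]
      exact Real.one_le_rpow_of_pos_of_le_one_of_nonpos ht h3.2 (by linarith)
    · rw [Set.indicator_of_notMem h3, norm_zero]; positivity
  have := norm_sub_le (aux_F t) (Set.indicator (Set.Ioc (0:ℝ) 1) (fun _ => (1 : ℂ)) t)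
  rw [aux_f]
  linarith

lemma aux_f_zero (t : ℝ) (h : 1 < t) : aux_f t = 0 := by
  rw [aux_f, aux_F_zero t (Or.inr h.le), Set.indicator_of_notMem (by simp [h])]
  simp

lemma aux_f_locint : MeasureTheory.LocallyIntegrableOn aux_f (Set.Ioi 0) := by
  obtain ⟨C, hC, h⟩ := aux_f_bound (1 / 2) (by norm_num)
  have hmeas : Measurable aux_f := aux_F_meas.sub (measurable_const.indicator measurableSet_Ioc)
  apply MeasureTheory.IntegrableOn.locallyIntegrableOn
  have hint : MeasureTheory.IntegrableOn (fun t : ℝ => C * t ^ (-(1 / 2) : ℝ)) (Set.Ioc 0 1) := by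
    have := intervalIntegral.intervalIntegrable_rpow' (a := 0) (b := 1) (r := -(1 / 2)) (by norm_num)
    rw [intervalIntegrable_iff_integrableOn_Ioc_of_le zero_le_one] at this
    exact this.const_mul C
  rw [← Set.Ioc_union_Ioi_eq_Ioi (zero_le_one' ℝ)]
  refine MeasureTheory.IntegrableOn.union ?_ ?_
  · refine MeasureTheory.Integrable.mono' hint hmeas.aestronglyMeasurable ?_
    filter_upwards [MeasureTheory.ae_restrict_mem measurableSet_Ioc] with t ht
    exact h t ht.1
  · refine MeasureTheory.IntegrableOn.congr_fun (f := fun _ => (0:ℂ)) (by simp) ?_ measurableSet_Ioi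
    intro t ht
    exact (aux_f_zero t ht).symm

lemma aux_f_bot (b : ℝ) (hb : 0 < b) : aux_f =O[nhdsWithin 0 (Set.Ioi 0)] (fun t : ℝ => t ^ (-b)) := by
  obtain ⟨C, hC, h⟩ := aux_f_bound b hb
  refine Asymptotics.IsBigO.of_bound C ?_
  filter_upwards [self_mem_nhdsWithin] with t ht
  have ht : 0 < t := ht
  rw [Real.norm_of_nonneg (by positivity)]
  exact h t ht

lemma aux_f_mellin (s : ℂ) (hs : 0 < s.re) : mellin aux_f s = aux_R s := by
  have hs0 : s ≠ 0 := by rintro rfl; simp at hs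
  have hc1 : MellinConvergent aux_f s := mellinConvergent_of_isBigO_rpow (a := s.re + 1) (b := s.re / 2)
    aux_f_locint (aux_ind_top _ _ aux_f_zero) (by linarith) (aux_f_bot _ (by linarith)) (by linarith)
  have hc2 := hasMellin_one_Ioc hs
  have h3 := (hasMellin_add hc1 hc2.1).2
  rw [hc2.2] at h3
  have e : (fun t => aux_f t + Set.indicator (Set.Ioc (0:ℝ) 1) (fun _ => (1 : ℂ)) t) = aux_F := by
    funext t; simp [aux_f]
  rw [e, aux_F_mellin s hs] at h3
  rw [aux_R_eq s hs0 (riemannZeta_ne_zero_of_one_le_re (by simpa using hs.le)), h3, one_div]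
  ring

lemma aux_h_mellin (s : ℂ) (hs : 0 < s.re) :
    MellinConvergent (fun t => Real.log t • aux_f t) s ∧
      mellin (fun t => Real.log t • aux_f t) s = deriv aux_R s := by
  have h := mellin_hasDerivAt_of_isBigO_rpow (a := s.re + 1) (b := s.re / 2) (s := s)
    aux_f_locint (aux_ind_top _ _ aux_f_zero) (by linarith) (aux_f_bot _ (by linarith)) (by linarith)
  refine ⟨h.1, ?_⟩
  have hev : aux_R =ᶠ[nhds s] mellin aux_f := by
    filter_upwards [(isOpen_lt continuous_const Complex.continuous_re).mem_nhds hs] with z hz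
    exact (aux_f_mellin z hz).symm
  rw [hev.deriv_eq, h.2.deriv]

lemma aux_e_large : ∃ C : ℝ, 0 < C ∧ ∀ x : ℝ, Real.exp 1 ≤ x → |aux_gM x - 1| * Real.log x ≤ C := by
  obtain ⟨C, hC, hCb⟩ := aux_R_deriv_bound
  have hint : MeasureTheory.Integrable (fun y : ℝ => C * (1 + |y|) ^ (-(11 / 8) : ℝ)) := by
    have := integrable_one_add_norm (E := ℝ) (μ := MeasureTheory.volume) (r := 11 / 8) (by simp; norm_num)
    exact this.const_mul C
  set I := ∫ y : ℝ, C * (1 + |y|) ^ (-(11 / 8) : ℝ) with hI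
  have hI0 : 0 ≤ I := MeasureTheory.integral_nonneg fun y => by positivity
  refine ⟨Real.exp 1 * I + 1, by positivity, fun x hx => ?_⟩
  have hx1 : 1 < x := lt_of_lt_of_le (by simp) hx
  have hx0 : 0 < x := by linarith
  have hlog : 1 ≤ Real.log x := (Real.le_log_iff_exp_le hx0).2 hx
  set σ := 1 / Real.log x with hσ
  have hσ0 : 0 < σ := by positivity
  have hσ1 : σ ≤ 1 := by rw [hσ, div_le_one (by linarith)]; exact hlog
  have hb : ∀ y : ℝ, ‖mellin (fun t => Real.log t • aux_f t) (σ + y * Complex.I)‖ ≤ C * (1 + |y|) ^ (-(11 / 8) : ℝ) := by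
    intro y
    rw [(aux_h_mellin _ (by simpa using hσ0)).2]
    have := hCb (σ + y * Complex.I) (by simpa using hσ0) (by simpa using hσ1)
    simpa using this
  have hmeas : Measurable (fun y : ℝ => mellin (fun t => Real.log t • aux_f t) (σ + y * Complex.I)) := by
    have e : (fun y : ℝ => mellin (fun t => Real.log t • aux_f t) (σ + y * Complex.I))
        = fun y : ℝ => deriv aux_R (σ + y * Complex.I) := by
      funext y
      exact (aux_h_mellin _ (by simpa using hσ0)).2
    rw [e]
    exact (measurable_deriv aux_R).comp (by fun_prop)
  have hvi : Complex.VerticalIntegrable (mellin (fun t => Real.log t • aux_f t)) σ :=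
    hint.mono' hmeas.aestronglyMeasurable (Filter.Eventually.of_forall hb)
  have hxi : 0 < x⁻¹ := by positivity
  have hxi1 : x⁻¹ < 1 := inv_lt_one_of_one_lt₀ hx1
  have hcont : ContinuousAt (fun t => Real.log t • aux_f t) x⁻¹ := by
    refine (Real.continuousAt_log hxi.ne').smul ?_
    refine (aux_F_cont _ hxi).sub ?_
    have : Set.indicator (Set.Ioc (0:ℝ) 1) (fun _ => (1 : ℂ)) =ᶠ[nhds x⁻¹] fun _ => 1 := by
      filter_upwards [Ioc_mem_nhds hxi hxi1] with t ht
      rw [Set.indicator_of_mem ht]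
    exact continuousAt_const.congr this.symm
  have hinv := mellinInv_mellin_eq σ _ hxi (aux_h_mellin σ (by simpa using hσ0)).1 hvi hcont
  have hval : ‖Real.log x⁻¹ • aux_f x⁻¹‖ = |aux_gM x - 1| * Real.log x := by
    rw [aux_f, aux_F_inv x hx1.le, Set.indicator_of_mem (show x⁻¹ ∈ Set.Ioc (0:ℝ) 1 from ⟨hxi, hxi1.le⟩), norm_smul, Real.log_inv, norm_neg,
      Real.norm_of_nonneg (by linarith), mul_comm]
    congr 1
    rw [← Complex.ofReal_one, ← Complex.ofReal_sub, Complex.norm_real, Real.norm_eq_abs]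
  rw [← hval, ← hinv, mellinInv, norm_smul]
  have hpow : ∀ y : ℝ, ‖((x⁻¹ : ℝ) : ℂ) ^ (-((σ : ℂ) + y * Complex.I))‖ = Real.exp 1 := by
    intro y
    rw [Complex.norm_cpow_eq_rpow_re_of_pos hxi, Real.rpow_def_of_pos hxi, Real.log_inv]
    congr 1
    simp only [Complex.neg_re, Complex.add_re, Complex.ofReal_re, Complex.mul_re, Complex.I_re, Complex.ofReal_im,
      Complex.I_im, hσ]
    field_simp
    ring
  have hn : ‖∫ y : ℝ, ((x⁻¹ : ℝ) : ℂ) ^ (-((σ : ℂ) + y * Complex.I)) •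
      mellin (fun t => Real.log t • aux_f t) (σ + y * Complex.I)‖ ≤ Real.exp 1 * I := by
    rw [hI, ← MeasureTheory.integral_const_mul]
    refine MeasureTheory.norm_integral_le_of_norm_le (hint.const_mul _) (Filter.Eventually.of_forall fun y => ?_)
    rw [norm_smul, hpow]
    gcongr
    exact hb y
  have hpi : ‖(1 / (2 * Real.pi) : ℝ)‖ ≤ 1 := by
    rw [Real.norm_of_nonneg (by positivity), div_le_one (by positivity)]
    linarith [Real.pi_gt_three]
  refine le_trans (mul_le_mul hpi hn (norm_nonneg _) zero_le_one) ?_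
  linarith

lemma aux_e_bound : ∃ C : ℝ, 0 < C ∧ ∀ x : ℝ, 1 ≤ x → |aux_gM x - 1| ≤ C / (1 + Real.log x) := by
  obtain ⟨C, hC, h⟩ := aux_e_large
  obtain ⟨D, hD, hDb⟩ := aux_F_bound 1 one_pos
  refine ⟨2 * C + 2 * (D * Real.exp 1 + 1), by positivity, fun x hx => ?_⟩
  have hx0 : 0 < x := by linarith
  have hl0 : 0 ≤ Real.log x := Real.log_nonneg hx
  rw [le_div_iff₀ (by linarith)]
  rcases le_total (Real.exp 1) x with h1 | h1
  · have hlog : 1 ≤ Real.log x := (Real.le_log_iff_exp_le hx0).2 h1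
    have := h x h1
    have h0 := abs_nonneg (aux_gM x - 1)
    have : 0 < Real.exp 1 := Real.exp_pos 1
    have : 0 ≤ D * Real.exp 1 := by positivity
    nlinarith
  · have hlog : Real.log x ≤ 1 := (Real.log_le_iff_le_exp hx0).2 h1
    have h2 := hDb x⁻¹ (by positivity)
    rw [aux_F_inv x hx, Complex.norm_real, Real.norm_eq_abs, Real.rpow_neg_one, inv_inv] at h2
    have h3 : |aux_gM x - 1| ≤ D * Real.exp 1 + 1 := by
      have h4 := abs_sub (aux_gM x) 1
      rw [abs_one] at h4
      have : D * x ≤ D * Real.exp 1 := by gcongr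
      linarith
    have h0 := abs_nonneg (aux_gM x - 1)
    nlinarith


lemma aux_log_sum (W : ℝ) (hW : 1 ≤ W) :
    ∑ n ∈ Finset.Icc 1 ⌊W⌋₊, (n : ℝ)⁻¹ * (1 / (1 + Real.log (W / n))) ^ 2 ≤ 2 / (1 - Real.log 2) := by
  have hl2 : Real.log 2 < 1 := by linarith [Real.log_two_lt_d9]
  set L := Real.log W with hL
  have hW0 : 0 < W := by linarith
  have hL0 : 0 ≤ L := Real.log_nonneg hW
  let a : ℕ → ℝ := fun n => 2 / (1 + L - Real.log n)
  have hstep : ∀ n ∈ Finset.Icc 1 ⌊W⌋₊, (n : ℝ)⁻¹ * (1 / (1 + Real.log (W / n))) ^ 2 ≤ a (n + 1) - a n := by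
    intro n hn
    rw [Finset.mem_Icc] at hn
    have hn1 : (1 : ℝ) ≤ n := by exact_mod_cast hn.1
    have hn0 : (0 : ℝ) < n := by linarith
    have hnW : (n : ℝ) ≤ W := (Nat.le_floor_iff hW0.le).1 hn.2
    rw [Real.log_div hW0.ne' hn0.ne']
    have hA : 1 ≤ 1 + L - Real.log n := by
      have := Real.log_le_log hn0 hnW; linarith
    have hB : 0 < 1 + L - Real.log ((n : ℝ) + 1) := by
      have h1 : Real.log ((n : ℝ) + 1) ≤ Real.log (2 * W) := Real.log_le_log (by linarith) (by linarith)
      rw [Real.log_mul two_ne_zero hW0.ne'] at h1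
      linarith
    have hinc : (n : ℝ)⁻¹ / 2 ≤ Real.log ((n : ℝ) + 1) - Real.log n := by
      rw [← Real.log_div (by linarith) hn0.ne']
      have h1 := Real.one_sub_inv_le_log_of_pos (x := ((n : ℝ) + 1) / n) (by positivity)
      have h2 : (n : ℝ)⁻¹ / 2 ≤ 1 - (((n : ℝ) + 1) / n)⁻¹ := by
        rw [inv_div]
        have : 1 - (n : ℝ) / (n + 1) = 1 / (n + 1) := by field_simp; ring
        rw [this, inv_eq_one_div, div_div]
        apply one_div_le_one_div_of_le <;> linarith
      linarith
    simp only [a]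
    push_cast
    set A := 1 + L - Real.log n with hAd
    set B := 1 + L - Real.log ((n : ℝ) + 1) with hBd
    have hAB : A - B ≥ (n : ℝ)⁻¹ / 2 := by rw [hAd, hBd]; linarith
    have hBA : B ≤ A := by have : 0 ≤ (n : ℝ)⁻¹ / 2 := by positivity
                           linarith
    have hA0 : 0 < A := by linarith
    have e1 : 1 + (L - Real.log n) = A := by rw [hAd]; ring
    rw [e1, div_sub_div _ _ hB.ne' hA0.ne', div_pow, one_pow]
    calc (n : ℝ)⁻¹ * (1 / A ^ 2) ≤ (2 * (A - B)) * (1 / (A ^ 2)) := by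
          gcongr; linarith
      _ ≤ (2 * (A - B)) * (1 / (B * A)) := by
          apply mul_le_mul_of_nonneg_left _ (by linarith)
          apply one_div_le_one_div_of_le (by positivity)
          rw [sq]; gcongr
      _ = _ := by ring
  refine (Finset.sum_le_sum hstep).trans ?_
  have hN : 1 ≤ ⌊W⌋₊ := Nat.one_le_floor_iff W |>.2 hW
  have htel : ∑ n ∈ Finset.Icc 1 ⌊W⌋₊, (a (n + 1) - a n) = a (⌊W⌋₊ + 1) - a 1 := by
    rw [← Finset.Ico_add_one_right_eq_Icc, Finset.sum_Ico_sub (f := a)]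
    omega
  rw [htel]
  have ha1 : 0 ≤ a 1 := by simp only [a, Nat.cast_one, Real.log_one, sub_zero]; positivity
  have : a (⌊W⌋₊ + 1) ≤ 2 / (1 - Real.log 2) := by
    simp only [a]
    have hf := Nat.floor_le hW0.le
    have h1 : Real.log (((⌊W⌋₊ + 1 : ℕ) : ℝ)) ≤ Real.log (2 * W) := by
      apply Real.log_le_log (by positivity)
      push_cast; linarith
    rw [Real.log_mul two_ne_zero hW0.ne'] at h1
    apply div_le_div_of_nonneg_left (by norm_num) (by linarith)
    linarith
  linarith

lemma aux_Q_bound : ∃ C : ℝ, 0 < C ∧ ∀ W : ℝ, 1 ≤ W →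
    ∑ n ∈ Finset.Icc 1 ⌊W⌋₊, (n : ℝ)⁻¹ * aux_gM (W / n) ^ 2 ≤ Real.log W + C := by
  obtain ⟨C, hC, hE⟩ := aux_e_bound
  have hl2 : Real.log 2 < 1 := by linarith [Real.log_two_lt_d9]
  refine ⟨C ^ 2 * (2 / (1 - Real.log 2)), ?_, ?_⟩
  · have : 0 < 1 - Real.log 2 := by linarith
    positivity
  intro W hW
  have hW0 : 0 < W := by linarith
  have h1 : ∀ n ∈ Finset.Icc 1 ⌊W⌋₊, (n : ℝ)⁻¹ * aux_gM (W / n) ^ 2 ≤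
      2 * ((n : ℝ)⁻¹ * aux_gM (W / n)) - (n : ℝ)⁻¹ +
      C ^ 2 * ((n : ℝ)⁻¹ * (1 / (1 + Real.log (W / n))) ^ 2) := by
    intro n hn
    rw [Finset.mem_Icc] at hn
    have hn0 : (0 : ℝ) < n := by exact_mod_cast hn.1
    have hnW : (n : ℝ) ≤ W := (Nat.le_floor_iff hW0.le).1 hn.2
    have h2 : 1 ≤ W / n := (one_le_div hn0).2 hnW
    have h3 := hE _ h2
    have h4 : (aux_gM (W / n) - 1) ^ 2 ≤ (C / (1 + Real.log (W / n))) ^ 2 := by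
      rw [← sq_abs]
      exact pow_le_pow_left₀ (abs_nonneg _) h3 2
    have h5 : aux_gM (W / n) ^ 2 = 2 * aux_gM (W / n) - 1 + (aux_gM (W / n) - 1) ^ 2 := by ring
    have hi : 0 ≤ (n : ℝ)⁻¹ := by positivity
    have h6 := mul_le_mul_of_nonneg_left h4 hi
    have h7 : (n : ℝ)⁻¹ * (C / (1 + Real.log (W / n))) ^ 2 = C ^ 2 * ((n : ℝ)⁻¹ * (1 / (1 + Real.log (W / n))) ^ 2) := by
      ring
    rw [h5]
    linarith
  refine (Finset.sum_le_sum h1).trans ?_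
  rw [Finset.sum_add_distrib, Finset.sum_sub_distrib, ← Finset.mul_sum, ← Finset.mul_sum, aux_gM_sum W hW]
  have h8 : Real.log W ≤ ∑ n ∈ Finset.Icc 1 ⌊W⌋₊, (n : ℝ)⁻¹ := by
    have := log_le_harmonic_floor W hW0.le
    rw [harmonic_eq_sum_Icc] at this
    push_cast at this
    exact this
  have h9 := mul_le_mul_of_nonneg_left (aux_log_sum W hW) (sq_nonneg C)
  linarith

theorem theta_sum_estimate (w : ℝ) (hw : 0 < w) :
    ∃ C : ℝ, 0 < C ∧ ∃ q₀ : ℕ, ∀ q : ℕ, q₀ ≤ q →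
      |∑ d₁ ∈ Finset.Icc 1 ⌊(q : ℝ) ^ w⌋₊, ∑ d₂ ∈ Finset.Icc 1 ⌊(q : ℝ) ^ w⌋₊,
          thetaD q w d₁ * thetaD q w d₂ *
            (if Nat.Coprime (Nat.lcm d₁ d₂) q then ((Nat.lcm d₁ d₂ : ℝ))⁻¹ else 0)|
        ≤ (1 + C / Real.log q) *
            ((q : ℝ) / ((Nat.totient q : ℝ) * (w * Real.log q))) := by
  obtain ⟨C, hC, hQ⟩ := aux_Q_bound
  refine ⟨C / w, by positivity, 3, ?_⟩
  intro q hq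
  have hq0 : (0 : ℝ) < q := by have : 0 < q := by omega
                               exact_mod_cast this
  have hq1 : (1 : ℝ) < q := by have : 1 < q := by omega
                               exact_mod_cast this
  have hL : 0 < Real.log q := Real.log_pos hq1
  set W := (q : ℝ) ^ w with hW
  have hW1 : 1 ≤ W := Real.one_le_rpow hq1.le hw.le
  have hW0 : 0 < W := by linarith
  have hlW : Real.log W = w * Real.log q := Real.log_rpow hq0 w
  have hlW0 : 0 < Real.log W := by rw [hlW]; positivity
  have hterm : ∀ d₁ ∈ Finset.Icc 1 ⌊W⌋₊, ∀ d₂ ∈ Finset.Icc 1 ⌊W⌋₊,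
      thetaD q w d₁ * thetaD q w d₂ *
            (if Nat.Coprime (Nat.lcm d₁ d₂) q then ((Nat.lcm d₁ d₂ : ℝ))⁻¹ else 0) =
      (1 / Real.log W ^ 2) * (aux_b q W d₁ * aux_b q W d₂ * ((Nat.lcm d₁ d₂ : ℝ))⁻¹) := by
    intro d₁ h1 d₂ h2
    rw [Finset.mem_Icc] at h1 h2
    have e1 : (d₁ : ℝ) ≤ W := (Nat.le_floor_iff hW0.le).1 h1.2
    have e2 : (d₂ : ℝ) ≤ W := (Nat.le_floor_iff hW0.le).1 h2.2
    have hcop : Nat.Coprime (Nat.lcm d₁ d₂) q ↔ (Nat.Coprime d₁ q ∧ Nat.Coprime d₂ q) := by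
      constructor
      · intro h
        exact ⟨h.coprime_dvd_left (Nat.dvd_lcm_left _ _), h.coprime_dvd_left (Nat.dvd_lcm_right _ _)⟩
      · rintro ⟨ha, hb⟩
        exact (ha.mul_left hb).coprime_dvd_left (Nat.lcm_dvd_mul _ _)
    rw [thetaD, thetaD, if_pos ⟨h1.1, e1⟩, if_pos ⟨h2.1, e2⟩, ← hW, aux_b, aux_b]
    by_cases ha : Nat.Coprime d₁ q
    · by_cases hb : Nat.Coprime d₂ q
      · rw [if_pos (hcop.2 ⟨ha, hb⟩), if_pos ha, if_pos hb]
        field_simp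
      · rw [if_neg (by tauto), if_neg hb]; simp
    · rw [if_neg (by tauto), if_neg ha]; simp
  rw [Finset.sum_congr rfl (fun d₁ hd₁ => Finset.sum_congr rfl (fun d₂ hd₂ => hterm d₁ hd₁ d₂ hd₂))]
  simp_rw [← Finset.mul_sum]
  rw [aux_diag ⌊W⌋₊ (aux_b q W)]
  have hnn : 0 ≤ ∑ r ∈ Finset.Icc 1 ⌊W⌋₊, (Nat.totient r : ℝ) *
        (∑ d ∈ Finset.Icc 1 ⌊W⌋₊, (if r ∣ d then aux_b q W d / d else 0)) ^ 2 :=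
    Finset.sum_nonneg (fun r _ => by positivity)
  rw [abs_of_nonneg (mul_nonneg (by positivity) hnn)]
  have hφ : (0 : ℝ) < Nat.totient q := by exact_mod_cast Nat.totient_pos.2 (by omega)
  have hb := aux_T_bound q (by omega) W
  have hb2 := mul_le_mul_of_nonneg_left (hQ W hW1) (show 0 ≤ (q : ℝ) / Nat.totient q by positivity)
  have hb3 := mul_le_mul_of_nonneg_left (hb.trans hb2) (show 0 ≤ 1 / Real.log W ^ 2 by positivity)
  refine hb3.trans (le_of_eq ?_)
  rw [hlW]
  field_simp
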